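/- arXiv:math/0605049 — 2 statements merged into one kernel-verified Lean document; each statement's English description precedes it below -/
import Mathlib

section
/- A map u : L^∞(Ω,ℱ,P) → ℝ satisfies (a) superadditivity u(X+Y) ≥ u(X)+u(Y), (b) monotonicity (X ≤ Y implies u(X) ≤ u(Y)), (c) positive homogeneity (u(λX) = λu(X) for all λ ≥ 0), (d) translation invariance (u(X+m) = u(X)+m for all m ∈ ℝ), and (e) the Fatou property (if |X_n| ≤ 1 and X_n → X in probability, then u(X) ≥ limsup_n u(X_n)) if and only if there exists a nonempty set D ⊆ 𝒫 such that u(X) = inf_{Q∈D} E_Q[X] for all X ∈ L^∞. -/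
open MeasureTheory Filter Set
open scoped ENNReal

variable {Ω : Type*} [MeasurableSpace Ω]

/-- Densities of probability measures absolutely continuous w.r.t. `P`. -/
def Dens (P : Measure Ω) : Set (Ω → ℝ) :=
  {Z | Measurable Z ∧ (∀ ω, 0 ≤ Z ω) ∧ ∫⁻ ω, ENNReal.ofReal (Z ω) ∂P = 1}

/-- `E_Q[X] = E_Q[X⁺] − E_Q[X⁻]` with the convention `∞ − ∞ = −∞`, where `dQ/dP = Z`. -/
noncomputable def eexp (P : Measure Ω) (Z X : Ω → ℝ) : EReal :=
  if (∫⁻ ω, ENNReal.ofReal (-(Z ω * X ω)) ∂P) = ⊤ then ⊥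
  else ((∫⁻ ω, ENNReal.ofReal (Z ω * X ω) ∂P : ℝ≥0∞) : EReal)
    - ((∫⁻ ω, ENNReal.ofReal (-(Z ω * X ω)) ∂P : ℝ≥0∞) : EReal)

/-- Coherent utility function determined by a set of densities `D`. -/
noncomputable def cohU (P : Measure Ω) (D : Set (Ω → ℝ)) (X : Ω → ℝ) : EReal :=
  ⨅ Z ∈ D, eexp P Z X

/-- The weak `L¹`-space associated with `D`. -/
def Lw (P : Measure Ω) (D : Set (Ω → ℝ)) : Set (Ω → ℝ) :=
  {X | Measurable X ∧ ⊥ < cohU P D X ∧ ⊥ < cohU P D (fun ω => -X ω)}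

noncomputable def tailSup (P : Measure Ω) (D : Set (Ω → ℝ)) (X : Ω → ℝ) (n : ℕ) : ℝ≥0∞ :=
  ⨆ Z ∈ D, ∫⁻ ω in {ω | (n : ℝ) < |X ω|}, ENNReal.ofReal (Z ω * |X ω|) ∂P

/-- The strong `L¹`-space associated with `D`. -/
def Ls (P : Measure Ω) (D : Set (Ω → ℝ)) : Set (Ω → ℝ) :=
  {X | Measurable X ∧ Tendsto (tailSup P D X) atTop (nhds 0)}

/-- Risk-neutral densities for the set `A` of attainable P&Ls. -/
def RiskNeutral (P : Measure Ω) (A : Set (Ω → ℝ)) : Set (Ω → ℝ) :=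
  {Z | Z ∈ Dens P ∧ ∀ X ∈ A, eexp P Z X ≤ 0}

/-- `A` is `D`-consistent. -/
def DConsistent (P : Measure Ω) (D A : Set (Ω → ℝ)) : Prop :=
  ∃ A' ⊆ A ∩ Ls P D, D ∩ RiskNeutral P A = D ∩ RiskNeutral P A'

/-- Sequential compactness of `D` in the weak topology `σ(L¹, L^∞)`. -/
def WSeqCompact (P : Measure Ω) (D : Set (Ω → ℝ)) : Prop :=
  ∀ Z : ℕ → Ω → ℝ, (∀ n, Z n ∈ D) → ∃ W ∈ D, ∃ φ : ℕ → ℕ, StrictMono φ ∧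
    ∀ g : Ω → ℝ, Measurable g → (∃ C : ℝ, ∀ ω, |g ω| ≤ C) →
      Tendsto (fun k => ∫ ω, Z (φ k) ω * g ω ∂P) atTop (nhds (∫ ω, W ω * g ω ∂P))

/-- `D` is closed under `L¹`-convergence (within densities). -/
def L1Closed (P : Measure Ω) (D : Set (Ω → ℝ)) : Prop :=
  ∀ Z : ℕ → Ω → ℝ, (∀ n, Z n ∈ D) → ∀ W ∈ Dens P,
    Tendsto (fun n => ∫ ω, |Z n ω - W ω| ∂P) atTop (nhds 0) → W ∈ D

/-!
A functional `u` that is coherent and has the Fatou property is the infimum of the `σ`-additive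
expectations dominating it: `u X < 0` has to yield a probability measure `Q ≪ P` with `u ≤ E_Q` and
`E_Q X ≤ 0`. View bounded functions in `L²(P)`. The Fatou property makes the acceptable set
`{0 ≤ u}` closed on `L^∞`-balls, and weak compactness of bounded closed convex sets in `L²` then
gives, as in the Krein–Šmulian theorem, thickness parameters `ε n > 0` such that `X + Y` is not
acceptable for any `Y` in the `ε n`-thickening of the `L^∞`-ball of radius `n` for every `n`. The
M. Riesz extension theorem separates the set of these `X + Y` from the acceptable set by a
positive functional `g` with `g 1 = 1`. As `t • 1_A` is one of the `Y` once `P A` is small,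
`g 1_A ≤ -g X / t`, so `g` is `σ`-additive and absolutely continuous.
-/

section KreinSmulian

variable {E : Type*} [NormedAddCommGroup E]

theorem inclusionInDoubleDual_surjective [InnerProductSpace ℝ E] [CompleteSpace E] :
    Function.Surjective (NormedSpace.inclusionInDoubleDual ℝ E) := by
  intro ψ
  refine ⟨(InnerProductSpace.toDual ℝ E).symm
    (ψ.comp (InnerProductSpace.toDualMap ℝ E).toContinuousLinearMap), ?_⟩
  ext f
  obtain ⟨x, rfl⟩ := (InnerProductSpace.toDual ℝ E).surjective f
  rw [NormedSpace.dual_def, InnerProductSpace.toDual_apply_apply, real_inner_comm,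
    InnerProductSpace.toDual_symm_apply]
  rfl

variable [NormedSpace ℝ E]

theorem isCompact_toWeakSpace_image
    (hE : Function.Surjective (NormedSpace.inclusionInDoubleDual ℝ E)) {s : Set E}
    (hconv : Convex ℝ s) (hclosed : IsClosed s) (hbdd : Bornology.IsBounded s) :
    IsCompact (toWeakSpace ℝ E '' s) := by
  rw [← hclosed.closure_eq, hconv.toWeakSpace_closure ℝ]
  refine NormedSpace.isCompact_closure_of_isBounded ℝ E _ ?_ fun ψ _ => ?_
  · rwa [preimage_image_eq _ (toWeakSpace ℝ E).injective]
  · obtain ⟨x, hx⟩ := hE ψ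
    exact ⟨toWeakSpace ℝ E x, hx⟩

theorem nonempty_iInter_of_antitone_convex
    (hE : Function.Surjective (NormedSpace.inclusionInDoubleDual ℝ E)) {K : ℕ → Set E}
    (hanti : Antitone K) (hne : ∀ n, (K n).Nonempty) (hconv : ∀ n, Convex ℝ (K n))
    (hclosed : ∀ n, IsClosed (K n)) (hbdd : Bornology.IsBounded (K 0)) : (⋂ n, K n).Nonempty := by
  have hcompact : ∀ n, IsCompact (toWeakSpace ℝ E '' K n) := fun n =>
    isCompact_toWeakSpace_image hE (hconv n) (hclosed n) (hbdd.subset (hanti n.zero_le))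
  have hinter : (⋂ n, toWeakSpace ℝ E '' K n).Nonempty :=
    IsCompact.nonempty_iInter_of_sequence_nonempty_isCompact_isClosed _
      (fun n => image_mono (hanti n.le_succ)) (fun n => (hne n).image _) (hcompact 0)
      fun n => (hcompact n).isClosed
  rwa [← image_iInter (toWeakSpace ℝ E).bijective, image_nonempty] at hinter

theorem exists_pos_disjoint_cthickening
    (hE : Function.Surjective (NormedSpace.inclusionInDoubleDual ℝ E)) {K L : Set E}
    (hKconv : Convex ℝ K) (hKclosed : IsClosed K) (hKbdd : Bornology.IsBounded K)
    (hLconv : Convex ℝ L) (hLclosed : IsClosed L) (hKL : Disjoint K L) :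
    ∃ ε > 0, Disjoint K (Metric.cthickening ε L) := by
  by_contra! hmeet
  have hanti : Antitone fun j : ℕ => K ∩ Metric.cthickening (1 / (j + 1 : ℝ)) L := fun i j hij =>
    inter_subset_inter_right _ (Metric.cthickening_mono (Nat.one_div_le_one_div hij) L)
  obtain ⟨x, hx⟩ := nonempty_iInter_of_antitone_convex hE hanti
    (fun j => not_disjoint_iff_nonempty_inter.1 (hmeet _ Nat.one_div_pos_of_nat))
    (fun j => hKconv.inter (hLconv.cthickening _))
    (fun j => hKclosed.inter Metric.isClosed_cthickening) (hKbdd.subset inter_subset_left)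
  rw [mem_iInter] at hx
  refine disjoint_left.1 hKL (hx 0).1 ?_
  rw [← hLclosed.closure_eq, Metric.closure_eq_iInter_cthickening]
  refine mem_iInter₂.2 fun δ hδ => ?_
  obtain ⟨j, hj⟩ := exists_nat_one_div_lt hδ
  exact Metric.cthickening_mono hj.le L (hx j).2

/-- The core of the Krein–Šmulian theorem: for increasing `B` with `0 ∈ B 0`, the sets
`⋂ n, cthickening (ε n) (B n)` are neighbourhoods of `0` in the mixed topology of the norm and the
`B n`. -/
theorem exists_disjoint_iInter_cthickening
    (hE : Function.Surjective (NormedSpace.inclusionInDoubleDual ℝ E))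
    {A : Set E} {B : ℕ → Set E} (hA : Convex ℝ A)
    (hAclosed : ∀ n, IsClosed (A ∩ B n)) (hB : ∀ n, Convex ℝ (B n))
    (hBclosed : ∀ n, IsClosed (B n)) (hBbdd : ∀ n, Bornology.IsBounded (B n))
    (hAB : Disjoint A (B 0)) :
    ∃ ε : ℕ → ℝ, (∀ n, 0 < ε n) ∧
      Disjoint (A ∩ ⋃ n, B n) (⋂ n, Metric.cthickening (ε n) (B n)) := by
  let Separates (n : ℕ) (W : Set E) : Prop := Convex ℝ W ∧ IsClosed W ∧ Disjoint (A ∩ B n) W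
  have hstep : ∀ n W, Separates n W →
      ∃ ε, 0 < ε ∧ Separates (n + 1) (W ∩ Metric.cthickening ε (B n)) := by
    rintro n W ⟨hWconv, hWclosed, hWdisj⟩
    have hdisj : Disjoint (A ∩ B (n + 1) ∩ W) (B n) :=
      disjoint_left.2 fun x hx hxn => disjoint_left.1 hWdisj ⟨hx.1.1, hxn⟩ hx.2
    obtain ⟨ε, hε, hεdisj⟩ := exists_pos_disjoint_cthickening hE
      ((hA.inter (hB (n + 1))).inter hWconv) ((hAclosed (n + 1)).inter hWclosed)
      ((hBbdd (n + 1)).subset (inter_subset_left.trans inter_subset_right)) (hB n) (hBclosed n)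
      hdisj
    exact ⟨ε, hε, hWconv.inter ((hB n).cthickening ε), hWclosed.inter Metric.isClosed_cthickening,
      disjoint_left.2 fun x hx hxW => disjoint_left.1 hεdisj ⟨hx, hxW.1⟩ hxW.2⟩
  choose! ε hεpos hεsep using hstep
  let W : ℕ → Set E := Nat.rec univ fun n V => V ∩ Metric.cthickening (ε n V) (B n)
  have hW : ∀ n, Separates n (W n) := by
    intro n
    induction n with
    | zero => exact ⟨convex_univ, isClosed_univ, by simp only [hAB.inter_eq, empty_disjoint]⟩
    | succ n ih => exact hεsep n _ ih
  have hsub : ∀ n, ⋂ k, Metric.cthickening (ε k (W k)) (B k) ⊆ W n := by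
    intro n
    induction n with
    | zero => exact subset_univ _
    | succ n ih => exact subset_inter ih (iInter_subset _ n)
  refine ⟨fun n => ε n (W n), fun n => hεpos n _ (hW n), disjoint_left.2 ?_⟩
  rintro x ⟨hxA, hxB⟩ hxU
  obtain ⟨n, hn⟩ := mem_iUnion.1 hxB
  exact disjoint_left.1 (hW n).2.2 ⟨hxA, hn⟩ (hsub n hxU)

end KreinSmulian

section BoundedMeasurable

open scoped Topology

variable (Ω) in
/-- The algebra of bounded measurable real functions on `Ω`. -/
def bddMeasurableSubalgebra : Subalgebra ℝ (Ω → ℝ) where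
  carrier := {X | Measurable X ∧ ∃ C : ℝ, ∀ ω, |X ω| ≤ C}
  mul_mem' := by
    rintro X Y ⟨hX, C, hC⟩ ⟨hY, D, hD⟩
    refine ⟨hX.mul hY, C * D, fun ω => ?_⟩
    rw [Pi.mul_apply, abs_mul]
    exact mul_le_mul (hC ω) (hD ω) (abs_nonneg _) ((abs_nonneg _).trans (hC ω))
  add_mem' := by
    rintro X Y ⟨hX, C, hC⟩ ⟨hY, D, hD⟩
    exact ⟨hX.add hY, C + D, fun ω => (abs_add_le _ _).trans (add_le_add (hC ω) (hD ω))⟩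
  algebraMap_mem' c := ⟨measurable_const, |c|, fun _ => le_rfl⟩

variable (Ω) in
/-- The type of bounded measurable real functions on `Ω`. They represent the elements of `L^∞(P)`
for every measure `P`; functions that agree `P`-almost everywhere are not identified. -/
abbrev BddMeasurable : Type _ := bddMeasurableSubalgebra Ω

namespace BddMeasurable

instance : CoeFun (BddMeasurable Ω) fun _ => Ω → ℝ := ⟨Subtype.val⟩

theorem measurable (X : BddMeasurable Ω) : Measurable X := X.2.1

theorem exists_abs_le (X : BddMeasurable Ω) : ∃ C > 0, ∀ ω, |X ω| ≤ C := by
  obtain ⟨C, hC⟩ := X.2.2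
  exact ⟨max C 1, by positivity, fun ω => (hC ω).trans (le_max_left _ _)⟩

theorem memLp (X : BddMeasurable Ω) (p : ℝ≥0∞) (μ : Measure Ω) [IsFiniteMeasure μ] :
    MemLp X p μ := by
  obtain ⟨C, -, hC⟩ := X.exists_abs_le
  exact .of_bound X.measurable.aestronglyMeasurable C (.of_forall hC)

theorem integrable (X : BddMeasurable Ω) (μ : Measure Ω) [IsFiniteMeasure μ] : Integrable X μ :=
  memLp_one_iff_integrable.1 (X.memLp 1 μ)

/-- The indicator function of a measurable set. -/
noncomputable def indicator {A : Set Ω} (hA : MeasurableSet A) : BddMeasurable Ω :=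
  ⟨A.indicator 1, measurable_one.indicator hA, 1, fun ω => by
    by_cases h : ω ∈ A <;> simp [h]⟩

/-- A simple function, as a bounded measurable function. -/
def ofSimpleFunc (φ : SimpleFunc Ω ℝ) : BddMeasurable Ω :=
  ⟨φ, φ.measurable, φ.exists_forall_norm_le⟩

theorem exists_simpleFunc_abs_sub_le (X : BddMeasurable Ω) {ε : ℝ} (hε : 0 < ε) :
    ∃ φ : SimpleFunc Ω ℝ, ∀ ω, |X ω - φ ω| ≤ ε := by
  obtain ⟨C, -, hC⟩ := X.exists_abs_le
  have hfinite : (range fun ω => ⌊X ω / ε⌋).Finite := by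
    refine (finite_Icc ⌊-C / ε⌋ ⌊C / ε⌋).subset (range_subset_iff.2 fun ω => ?_)
    obtain ⟨hl, hu⟩ := abs_le.1 (hC ω)
    exact ⟨Int.floor_mono (by gcongr), Int.floor_mono (by gcongr)⟩
  let φ : SimpleFunc Ω ℤ :=
    ⟨fun ω => ⌊X ω / ε⌋, fun k =>
      (X.measurable.div_const ε).floor (measurableSet_singleton k), hfinite⟩
  refine ⟨φ.map fun k : ℤ => (k : ℝ) * ε, fun ω => ?_⟩
  have hl : ⌊X ω / ε⌋ * ε ≤ X ω := (le_div_iff₀ hε).1 (Int.floor_le _)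
  have hu : X ω < (⌊X ω / ε⌋ + 1) * ε := (div_lt_iff₀ hε).1 (Int.lt_floor_add_one _)
  rw [SimpleFunc.map_apply, abs_le]
  constructor <;> simp only [φ, SimpleFunc.coe_mk] <;> linarith

theorem map_ofSimpleFunc_eq {f g : BddMeasurable Ω →ₗ[ℝ] ℝ}
    (hfg : ∀ (A : Set Ω) (hA : MeasurableSet A), f (indicator hA) = g (indicator hA))
    (φ : SimpleFunc Ω ℝ) : f (ofSimpleFunc φ) = g (ofSimpleFunc φ) := by
  induction φ using SimpleFunc.induction with
  | @const c A hA =>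
    have hsmul : ofSimpleFunc (.piecewise A hA (.const Ω c) (.const Ω 0)) = c • indicator hA := by
      ext ω
      by_cases h : ω ∈ A <;> simp [ofSimpleFunc, indicator, h]
    rw [hsmul, map_smul, map_smul, hfg]
  | @add φ ψ _ hφ hψ =>
    have hadd : ofSimpleFunc (φ + ψ) = ofSimpleFunc φ + ofSimpleFunc ψ := rfl
    rw [hadd, map_add, map_add, hφ, hψ]

theorem abs_map_le_of_abs_le {f : BddMeasurable Ω →ₗ[ℝ] ℝ} (hf : ∀ X, 0 ≤ X → 0 ≤ f X)
    {X : BddMeasurable Ω} {ε : ℝ} (hX : ∀ ω, |X ω| ≤ ε) : |f X| ≤ ε * f 1 := by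
  have hpos := hf (ε • 1 + X) fun ω => show 0 ≤ ε * 1 + X ω by linarith [(abs_le.1 (hX ω)).1]
  have hneg := hf (ε • 1 - X) fun ω => show 0 ≤ ε * 1 - X ω by linarith [(abs_le.1 (hX ω)).2]
  rw [map_add, map_smul, smul_eq_mul] at hpos
  rw [map_sub, map_smul, smul_eq_mul] at hneg
  exact abs_le.2 ⟨by linarith, by linarith⟩

theorem linearMap_ext_of_nonneg {f g : BddMeasurable Ω →ₗ[ℝ] ℝ} (hf : ∀ X, 0 ≤ X → 0 ≤ f X)
    (hg : ∀ X, 0 ≤ X → 0 ≤ g X)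
    (hfg : ∀ (A : Set Ω) (hA : MeasurableSet A), f (indicator hA) = g (indicator hA)) : f = g := by
  ext X
  have hbound : ∀ ε > 0, |f X - g X| ≤ ε * (f 1 + g 1) := by
    intro ε hε
    obtain ⟨φ, hφ⟩ := X.exists_simpleFunc_abs_sub_le hε
    have hXφ : ∀ ω, |(X - ofSimpleFunc φ) ω| ≤ ε := hφ
    have hfX := abs_map_le_of_abs_le hf hXφ
    have hgX := abs_map_le_of_abs_le hg hXφ
    have hφ_eq := map_ofSimpleFunc_eq hfg φ
    rw [map_sub] at hfX hgX
    calc |f X - g X|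
        = |(f X - f (ofSimpleFunc φ)) - (g X - g (ofSimpleFunc φ))| := by rw [hφ_eq]; ring_nf
      _ ≤ _ := abs_sub _ _
      _ ≤ ε * (f 1 + g 1) := by linarith
  have hlim : Tendsto (fun ε : ℝ => ε * (f 1 + g 1)) (𝓝[>] 0) (𝓝 0) :=
    ((continuous_mul_const _).tendsto' 0 0 (zero_mul _)).mono_left nhdsWithin_le_nhds
  have habs := ge_of_tendsto hlim (eventually_mem_nhdsWithin.mono hbound)
  exact sub_eq_zero.1 (abs_nonpos_iff.1 habs)

/-- Integration against a finite measure, as a linear functional. -/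
noncomputable def integralₗ (μ : Measure Ω) [IsFiniteMeasure μ] : BddMeasurable Ω →ₗ[ℝ] ℝ where
  toFun X := ∫ ω, X ω ∂μ
  map_add' X Y := integral_add (X.integrable μ) (Y.integrable μ)
  map_smul' c X := integral_const_mul c X

@[simp]
theorem integralₗ_apply (μ : Measure Ω) [IsFiniteMeasure μ] (X : BddMeasurable Ω) :
    integralₗ μ X = ∫ ω, X ω ∂μ := rfl

theorem integralₗ_one (μ : Measure Ω) [IsFiniteMeasure μ] : integralₗ μ 1 = μ.real univ :=
  (integral_const (1 : ℝ)).trans (mul_one _)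

theorem integralₗ_indicator (μ : Measure Ω) [IsFiniteMeasure μ] {A : Set Ω} (hA : MeasurableSet A) :
    integralₗ μ (indicator hA) = μ.real A :=
  integral_indicator_one hA

variable {f : BddMeasurable Ω →ₗ[ℝ] ℝ}

theorem map_indicator_nonneg (hf : ∀ X, 0 ≤ X → 0 ≤ f X) {A : Set Ω} (hA : MeasurableSet A) :
    0 ≤ f (indicator hA) :=
  hf _ fun ω => indicator_nonneg (fun _ _ => zero_le_one) ω

variable {P : Measure Ω} [IsFiniteMeasure P]

theorem hasSum_map_indicator (hf : ∀ X, 0 ≤ X → 0 ≤ f X)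
    (hcont : ∀ (A : ℕ → Set Ω) (hA : ∀ n, MeasurableSet (A n)),
      Tendsto (fun n => P (A n)) atTop (𝓝 0) →
        Tendsto (fun n => f (indicator (hA n))) atTop (𝓝 0))
    {A : ℕ → Set Ω} (hA : ∀ n, MeasurableSet (A n))
    (hdisj : Pairwise (Function.onFun Disjoint A)) :
    HasSum (fun n => f (indicator (hA n))) (f (indicator (.iUnion hA))) := by
  let R : ℕ → Set Ω := fun n => ⋃ k ≥ n, A k
  have hR : ∀ n, MeasurableSet (R n) := fun n => .iUnion fun k => .iUnion fun _ => hA k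
  have hR_succ : ∀ n, indicator (hR n) = indicator (hA n) + indicator (hR (n + 1)) := by
    intro n
    have hunion : R n = A n ∪ R (n + 1) := by
      ext ω
      simp only [R, mem_union, mem_iUnion, exists_prop]
      grind
    have hdisj_n : Disjoint (A n) (R (n + 1)) := by
      simp only [R, disjoint_iUnion_right]
      exact fun k hk => hdisj (by omega)
    refine Subtype.ext ?_
    simp only [indicator, hunion, indicator_union_of_disjoint hdisj_n]
    rfl
  have hsplit : ∀ n, ∑ k ∈ Finset.range n, f (indicator (hA k)) =
      f (indicator (.iUnion hA)) - f (indicator (hR n)) := by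
    intro n
    induction n with
    | zero => simp [R]
    | succ n ih => rw [Finset.sum_range_succ, ih, hR_succ, map_add]; ring
  have htail : Tendsto (fun n => P (R n)) atTop (𝓝 0) :=
    tendsto_measure_biUnion_Ici_zero_of_pairwise_disjoint
      (fun n => (hA n).nullMeasurableSet) hdisj
  rw [hasSum_iff_tendsto_nat_of_nonneg fun n => map_indicator_nonneg hf (hA n)]
  simpa only [hsplit, sub_zero] using (hcont R hR htail).const_sub (f (indicator (.iUnion hA)))

theorem exists_measure_forall_eq_integral (hf : ∀ X, 0 ≤ X → 0 ≤ f X)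
    (hcont : ∀ (A : ℕ → Set Ω) (hA : ∀ n, MeasurableSet (A n)),
      Tendsto (fun n => P (A n)) atTop (𝓝 0) →
        Tendsto (fun n => f (indicator (hA n))) atTop (𝓝 0)) :
    ∃ Q : Measure Ω, IsFiniteMeasure Q ∧ Q ≪ P ∧ ∀ X, f X = ∫ ω, X ω ∂Q := by
  let Q : Measure Ω := .ofMeasurable (fun A hA => ENNReal.ofReal (f (indicator hA)))
    (by
      have hempty : indicator (MeasurableSet.empty (α := Ω)) = 0 :=
        Subtype.ext (indicator_empty 1)
      rw [hempty, map_zero, ENNReal.ofReal_zero])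
    fun A hA hdisj => by
      have hsum := hasSum_map_indicator hf hcont hA hdisj
      rw [← hsum.tsum_eq, ENNReal.ofReal_tsum_of_nonneg
        (fun n => map_indicator_nonneg hf (hA n)) hsum.summable]
  have hQ : ∀ A (hA : MeasurableSet A), Q A = ENNReal.ofReal (f (indicator hA)) := fun A hA =>
    Measure.ofMeasurable_apply A hA
  have : IsFiniteMeasure Q := ⟨by rw [hQ _ .univ]; exact ENNReal.ofReal_lt_top⟩
  refine ⟨Q, this, Measure.AbsolutelyContinuous.mk fun A hA hPA => ?_, fun X => ?_⟩
  · have h := hcont (fun _ => A) (fun _ => hA) (by simp only [hPA, tendsto_const_nhds])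
    rw [hQ A hA, tendsto_nhds_unique tendsto_const_nhds h, ENNReal.ofReal_zero]
  · have : f = integralₗ Q := linearMap_ext_of_nonneg hf (fun X hX => integral_nonneg hX)
      fun A hA => by
        rw [integralₗ_indicator, measureReal_def, hQ A hA,
          ENNReal.toReal_ofReal (map_indicator_nonneg hf hA)]
    rw [this, integralₗ_apply]

end BddMeasurable

end BoundedMeasurable

section CoherentUtility

open scoped Topology Pointwise

/-- A coherent utility function on the bounded measurable functions. -/
structure IsCoherentUtility (u : BddMeasurable Ω → ℝ) : Prop where
  superadditive : ∀ X Y, u X + u Y ≤ u (X + Y)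
  monotone : Monotone u
  map_smul : ∀ c : ℝ, 0 ≤ c → ∀ X, u (c • X) = c * u X
  map_add_const : ∀ X (m : ℝ), u (X + algebraMap ℝ _ m) = u X + m

/-- The Fatou property of `u` under the reference measure `P`. -/
def FatouProperty (P : Measure Ω) (u : BddMeasurable Ω → ℝ) : Prop :=
  ∀ (Xs : ℕ → BddMeasurable Ω) (X : BddMeasurable Ω), (∀ n ω, |Xs n ω| ≤ 1) →
    TendstoInMeasure P (fun n => Xs n) atTop X → limsup (fun n => u (Xs n)) atTop ≤ u X

variable {u : BddMeasurable Ω → ℝ}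

theorem isCoherentUtility_of_isGLB {ι : Type*} {g : ι → BddMeasurable Ω →ₗ[ℝ] ℝ}
    (hg : ∀ i X, 0 ≤ X → 0 ≤ g i X) (hg_one : ∀ i, g i 1 = 1)
    (hu : ∀ X, IsGLB (range fun i => g i X) (u X)) : IsCoherentUtility u where
  superadditive X Y := (hu _).2 <| forall_mem_range.2 fun i => by
    rw [map_add]
    exact add_le_add ((hu X).1 (mem_range_self i)) ((hu Y).1 (mem_range_self i))
  monotone X Y hXY := (hu Y).2 <| forall_mem_range.2 fun i => by
    have hsub := hg i (Y - X) (sub_nonneg.2 hXY)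
    rw [map_sub, sub_nonneg] at hsub
    exact ((hu X).1 (mem_range_self i)).trans hsub
  map_smul c hc X := by
    have h := (hu X).mul_left hc
    rw [← range_comp] at h
    refine (hu (c • X)).unique ?_
    simpa only [Function.comp_def, LinearMap.map_smul, smul_eq_mul] using h
  map_add_const X m := by
    have h := (OrderIso.addRight m).isGLB_image'.2 (hu X)
    rw [← range_comp] at h
    refine (hu _).unique ?_
    simpa only [Function.comp_def, OrderIso.addRight_apply, map_add, Algebra.algebraMap_eq_smul_one,
      LinearMap.map_smul, hg_one, smul_eq_mul, mul_one] using h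

theorem tendsto_integral_of_tendstoInMeasure {P Q : Measure Ω} [IsFiniteMeasure Q] (hQ : Q ≪ P)
    {Xs : ℕ → BddMeasurable Ω} {X : BddMeasurable Ω} {C : ℝ} (hC : ∀ n ω, |Xs n ω| ≤ C)
    (hlim : TendstoInMeasure P (fun n => Xs n) atTop X) :
    Tendsto (fun n => ∫ ω, Xs n ω ∂Q) atTop (𝓝 (∫ ω, X ω ∂Q)) := by
  refine tendsto_of_subseq_tendsto fun ns hns => ?_
  obtain ⟨ms, -, hms⟩ := (hlim.comp hns).exists_seq_tendsto_ae
  exact ⟨ms, tendsto_integral_of_dominated_convergence (fun _ => C)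
    (fun n => (Xs _).measurable.aestronglyMeasurable) (integrable_const C)
    (fun n => .of_forall (hC _)) (hQ hms)⟩

theorem fatouProperty_of_isGLB {P : Measure Ω} {ι : Type*} {Q : ι → Measure Ω}
    [∀ i, IsProbabilityMeasure (Q i)] (hQ : ∀ i, Q i ≪ P)
    (hu : ∀ X, IsGLB (range fun i => ∫ ω, X ω ∂Q i) (u X)) : FatouProperty P u := by
  intro Xs X hXs hlim
  have hlower : ∀ n, -1 ≤ u (Xs n) := fun n => (hu _).2 <| forall_mem_range.2 fun i => by
    have hle := integral_mono (integrable_const (-1)) ((Xs n).integrable (Q i))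
      fun ω => (abs_le.1 (hXs n ω)).1
    simpa only [integral_const, probReal_univ, one_smul] using hle
  refine (hu X).2 (forall_mem_range.2 fun i => ?_)
  have hint := tendsto_integral_of_tendstoInMeasure (hQ i) hXs hlim
  rw [← hint.limsup_eq]
  exact limsup_le_limsup (.of_forall fun n => (hu (Xs n)).1 (mem_range_self i))
    (isBoundedUnder_of ⟨-1, hlower⟩).isCoboundedUnder_le hint.isBoundedUnder_le

namespace IsCoherentUtility

theorem map_zero (hu : IsCoherentUtility u) : u 0 = 0 := by simpa using hu.map_smul 0 le_rfl 0

theorem map_const (hu : IsCoherentUtility u) (m : ℝ) : u (algebraMap ℝ _ m) = m := by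
  rw [← zero_add (algebraMap ℝ _ m), hu.map_add_const, hu.map_zero, zero_add]

theorem map_le_of_abs_le (hu : IsCoherentUtility u) {X : BddMeasurable Ω} {C : ℝ}
    (hX : ∀ ω, |X ω| ≤ C) : u X ≤ C :=
  (hu.monotone fun ω => (abs_le.1 (hX ω)).2).trans_eq (hu.map_const C)

end IsCoherentUtility

/-- The class in `L²(P)` of a bounded measurable function. -/
noncomputable def toL2 (P : Measure Ω) [IsFiniteMeasure P] : BddMeasurable Ω →ₗ[ℝ] Lp ℝ 2 P where
  toFun X := (X.memLp 2 P).toLp X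
  map_add' _ _ := rfl
  map_smul' _ _ := rfl

variable {P : Measure Ω} [IsFiniteMeasure P]

theorem coeFn_toL2 (X : BddMeasurable Ω) : toL2 P X =ᵐ[P] X := (X.memLp 2 P).coeFn_toLp

theorem tendstoInMeasure_of_tendsto_toL2 {Xs : ℕ → BddMeasurable Ω} {X : BddMeasurable Ω}
    (hlim : Tendsto (fun n => toL2 P (Xs n)) atTop (𝓝 (toL2 P X))) :
    TendstoInMeasure P (fun n => Xs n) atTop X :=
  (tendstoInMeasure_of_tendsto_Lp hlim).congr (fun n => coeFn_toL2 (Xs n)) (coeFn_toL2 X)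

theorem nonneg_of_tendsto_toL2 (hu : IsCoherentUtility u) (hfatou : FatouProperty P u)
    {Xs : ℕ → BddMeasurable Ω} {X : BddMeasurable Ω} {C : ℝ} (hC : ∀ n ω, |Xs n ω| ≤ C)
    (hlim : Tendsto (fun n => toL2 P (Xs n)) atTop (𝓝 (toL2 P X))) (hXs : ∀ n, 0 ≤ u (Xs n)) :
    0 ≤ u X := by
  let c : ℝ := (|C| + 1)⁻¹
  have hc : 0 < c := by positivity
  have hbound : ∀ n ω, |(c • Xs n) ω| ≤ 1 := fun n ω => by
    have := (hC n ω).trans (le_abs_self C)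
    change |c * Xs n ω| ≤ 1
    rw [abs_mul, abs_of_pos hc, inv_mul_le_one₀ (by positivity)]
    linarith
  have hlimsup : 0 ≤ limsup (fun n => u (c • Xs n)) atTop := by
    refine le_limsup_of_frequently_le (.of_forall fun n => ?_) ?_
    · rw [hu.map_smul c hc.le]
      exact mul_nonneg hc.le (hXs n)
    · exact isBoundedUnder_of ⟨1, fun n => hu.map_le_of_abs_le (hbound n)⟩
  have hcX : limsup (fun n => u (c • Xs n)) atTop ≤ u (c • X) :=
    hfatou _ _ hbound <| tendstoInMeasure_of_tendsto_toL2 <| by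
      simpa only [LinearMap.map_smul] using hlim.const_smul c
  rw [hu.map_smul c hc.le] at hcX
  exact nonneg_of_mul_nonneg_right (hlimsup.trans hcX) hc

theorem nonneg_of_toL2_eq (hu : IsCoherentUtility u) (hfatou : FatouProperty P u)
    {X Y : BddMeasurable Ω} (hXY : toL2 P X = toL2 P Y) (hX : 0 ≤ u X) : 0 ≤ u Y := by
  obtain ⟨C, -, hC⟩ := X.exists_abs_le
  exact nonneg_of_tendsto_toL2 hu hfatou (fun _ : ℕ => hC) (hXY ▸ tendsto_const_nhds) fun _ => hX

theorem toL2_mono {X Y : BddMeasurable Ω} (hXY : X ≤ Y) : toL2 P X ≤ toL2 P Y := by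
  rw [← Lp.coeFn_le]
  filter_upwards [coeFn_toL2 (P := P) X, coeFn_toL2 (P := P) Y] with ω hX hY
  rw [hX, hY]
  exact hXY ω

instance posSMulMono_lp {p : ℝ≥0∞} {μ : Measure Ω} : PosSMulMono ℝ (Lp ℝ p μ) where
  smul_le_smul_of_nonneg_left c hc f g hfg := by
    rw [← Lp.coeFn_le] at hfg ⊢
    filter_upwards [hfg, Lp.coeFn_smul c f, Lp.coeFn_smul c g] with ω hω hf hg
    rw [hf, hg]
    exact mul_le_mul_of_nonneg_left hω hc

variable (P) in
/-- The closed ball of radius `r` of `L^∞(P)`, as a subset of `L²(P)`. -/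
def lInftyBall (r : ℝ) : Set (Lp ℝ 2 P) :=
  Icc (toL2 P (algebraMap ℝ _ (-r))) (toL2 P (algebraMap ℝ _ r))

theorem convex_lInftyBall (r : ℝ) : Convex ℝ (lInftyBall P r) := convex_Icc _ _

theorem isClosed_lInftyBall (r : ℝ) : IsClosed (lInftyBall P r) := isClosed_Icc

theorem lInftyBall_zero : lInftyBall P 0 = {0} := by
  rw [lInftyBall, neg_zero, map_zero, map_zero, Icc_self]

theorem isBounded_lInftyBall (r : ℝ) : Bornology.IsBounded (lInftyBall P r) := by
  rw [isBounded_iff_forall_norm_le]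
  refine ⟨‖toL2 P (algebraMap ℝ _ r)‖, fun x hx => HasSolidNorm.solid ?_⟩
  obtain ⟨hl, hu⟩ := hx
  rw [map_neg, map_neg] at hl
  exact (abs_le'.2 ⟨hu, neg_le.1 hl⟩).trans (le_abs_self _)

theorem toL2_mem_lInftyBall {X : BddMeasurable Ω} {r : ℝ} (hX : ∀ ω, |X ω| ≤ r) :
    toL2 P X ∈ lInftyBall P r :=
  ⟨toL2_mono fun ω => (abs_le.1 (hX ω)).1, toL2_mono fun ω => (abs_le.1 (hX ω)).2⟩

theorem exists_toL2_eq_of_mem_lInftyBall {x : Lp ℝ 2 P} {r : ℝ} (hr : 0 ≤ r)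
    (hx : x ∈ lInftyBall P r) : ∃ X : BddMeasurable Ω, (∀ ω, |X ω| ≤ r) ∧ toL2 P X = x := by
  have hbound : ∀ ω, |max (-r) (min r (x ω))| ≤ r := fun ω =>
    abs_le.2 ⟨le_max_left _ _, max_le (by linarith) (min_le_left _ _)⟩
  let X : BddMeasurable Ω :=
    ⟨fun ω => max (-r) (min r (x ω)),
      measurable_const.max (measurable_const.min (Lp.stronglyMeasurable x).measurable), r, hbound⟩
  refine ⟨X, hbound, Lp.ext ?_⟩
  filter_upwards [coeFn_toL2 (P := P) X, coeFn_toL2 (P := P) (algebraMap ℝ _ (-r)),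
    coeFn_toL2 (P := P) (algebraMap ℝ _ r), Lp.coeFn_le _ _ |>.2 hx.1, Lp.coeFn_le _ _ |>.2 hx.2]
    with ω hX hneg hpos hl hr
  rw [hneg] at hl
  rw [hpos] at hr
  rw [hX]
  exact (congrArg _ (min_eq_right hr)).trans (max_eq_right hl)

theorem iUnion_lInftyBall : ⋃ n : ℕ, lInftyBall P n = range (toL2 P) := by
  refine Subset.antisymm (iUnion_subset fun n x hx => ?_) (range_subset_iff.2 fun X => ?_)
  · obtain ⟨X, -, rfl⟩ := exists_toL2_eq_of_mem_lInftyBall n.cast_nonneg hx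
    exact mem_range_self X
  · obtain ⟨C, -, hC⟩ := X.exists_abs_le
    obtain ⟨n, hn⟩ := exists_nat_ge C
    exact mem_iUnion.2 ⟨n, toL2_mem_lInftyBall fun ω => (hC ω).trans hn⟩

theorem IsCoherentUtility.convex_setOf_nonneg (hu : IsCoherentUtility u) :
    Convex ℝ {X | 0 ≤ u X} := by
  intro X hX Y hY a b ha hb _
  refine le_trans ?_ (hu.superadditive _ _)
  rw [hu.map_smul a ha, hu.map_smul b hb]
  exact add_nonneg (mul_nonneg ha hX) (mul_nonneg hb hY)

theorem isClosed_toL2_image_inter_lInftyBall (hu : IsCoherentUtility u)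
    (hfatou : FatouProperty P u) (X : BddMeasurable Ω) {r : ℝ} (hr : 0 ≤ r) :
    IsClosed (toL2 P '' {Y | 0 ≤ u (X + Y)} ∩ lInftyBall P r) := by
  refine IsSeqClosed.isClosed fun x y hx hy => ?_
  have hy_mem := (isClosed_lInftyBall r).mem_of_tendsto hy (.of_forall fun n => (hx n).2)
  obtain ⟨Y, -, rfl⟩ := exists_toL2_eq_of_mem_lInftyBall hr hy_mem
  refine ⟨mem_image_of_mem _ ?_, hy_mem⟩
  choose Ys hYs_bound hYs using fun n => exists_toL2_eq_of_mem_lInftyBall hr (hx n).2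
  have hnonneg : ∀ n, 0 ≤ u (X + Ys n) := fun n => by
    obtain ⟨Z, hZ, hZx⟩ := (hx n).1
    refine nonneg_of_toL2_eq hu hfatou ?_ hZ
    rw [map_add, map_add, hZx, hYs]
  obtain ⟨C, -, hC⟩ := X.exists_abs_le
  refine nonneg_of_tendsto_toL2 hu hfatou (C := C + r) (Xs := fun n => X + Ys n)
    (fun n ω => (abs_add_le _ _).trans (add_le_add (hC ω) (hYs_bound n ω))) ?_ hnonneg
  simpa only [map_add, hYs] using hy.const_add (toL2 P X)

theorem exists_forall_neg_of_mem_iInter_cthickening (hu : IsCoherentUtility u)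
    (hfatou : FatouProperty P u) {X : BddMeasurable Ω} (hX : u X < 0) :
    ∃ ε : ℕ → ℝ, (∀ n, 0 < ε n) ∧ ∀ Y : BddMeasurable Ω,
      toL2 P Y ∈ ⋂ n : ℕ, Metric.cthickening (ε n) (lInftyBall P n) → u (X + Y) < 0 := by
  have hconv : Convex ℝ (toL2 P '' {Y | 0 ≤ u (X + Y)}) :=
    (hu.convex_setOf_nonneg.translate_preimage_right X).linear_image _
  have hzero : Disjoint (toL2 P '' {Y | 0 ≤ u (X + Y)}) (lInftyBall P (0 : ℕ)) := by
    rw [Nat.cast_zero, lInftyBall_zero, disjoint_singleton_right]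
    rintro ⟨Y, hY, hY0⟩
    refine hX.not_ge (nonneg_of_toL2_eq hu hfatou ?_ hY)
    rw [map_add, hY0, add_zero]
  obtain ⟨ε, hε, hdisj⟩ := exists_disjoint_iInter_cthickening
    inclusionInDoubleDual_surjective hconv
    (fun n => isClosed_toL2_image_inter_lInftyBall hu hfatou X n.cast_nonneg)
    (fun n => convex_lInftyBall n) (fun n => isClosed_lInftyBall n)
    (fun n => isBounded_lInftyBall n) hzero
  rw [iUnion_lInftyBall] at hdisj
  refine ⟨ε, hε, fun Y hY => ?_⟩
  by_contra! hnonneg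
  exact disjoint_left.1 hdisj ⟨mem_image_of_mem _ hnonneg, mem_range_self Y⟩ hY

theorem eventually_toL2_mem_iInter_cthickening {ε : ℕ → ℝ} (hε : ∀ n, 0 < ε n)
    {Xs : ℕ → BddMeasurable Ω} {C : ℝ} (hC : ∀ n ω, |Xs n ω| ≤ C)
    (hlim : Tendsto (fun n => toL2 P (Xs n)) atTop (𝓝 0)) :
    ∀ᶠ n in atTop, toL2 P (Xs n) ∈ ⋂ k : ℕ, Metric.cthickening (ε k) (lInftyBall P k) := by
  obtain ⟨m, hm⟩ := exists_nat_ge C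
  have hsmall : ∀ᶠ n in atTop, ∀ k ∈ Finset.range m,
      toL2 P (Xs n) ∈ Metric.cthickening (ε k) (lInftyBall P k) := by
    refine (eventually_all_finset _).2 fun k _ => hlim.eventually_mem ?_
    have hzero : (0 : Lp ℝ 2 P) ∈ lInftyBall P k := by
      rw [← map_zero (toL2 P)]
      exact toL2_mem_lInftyBall fun _ => abs_zero.trans_le k.cast_nonneg
    exact mem_of_superset (Metric.closedBall_mem_nhds 0 (hε k))
      (Metric.closedBall_subset_cthickening hzero _)
  filter_upwards [hsmall] with n hn
  refine mem_iInter.2 fun k => ?_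
  obtain hk | hk := lt_or_ge k m
  · exact hn k (Finset.mem_range.2 hk)
  · exact Metric.self_subset_cthickening _ <| toL2_mem_lInftyBall fun ω =>
      (hC n ω).trans (hm.trans (Nat.cast_le.2 hk))

theorem tendsto_toL2_indicator {A : ℕ → Set Ω} (hA : ∀ n, MeasurableSet (A n))
    (hlim : Tendsto (fun n => P (A n)) atTop (𝓝 0)) :
    Tendsto (fun n => toL2 P (.indicator (hA n))) atTop (𝓝 0) := by
  rw [← indicatorConstLp_empty (c := (1 : ℝ))]
  refine tendsto_indicatorConstLp_set (ht := hA) (hμt := fun n => measure_ne_top P (A n))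
    ENNReal.ofNat_ne_top ?_
  simpa only [← bot_eq_empty, symmDiff_bot] using hlim

namespace IsCoherentUtility

variable {S : Set (BddMeasurable Ω)}

/-- The cone generated by `-S` and the acceptable positions `{X | 0 ≤ u X}`, on which the functional
separating `S` from the acceptable positions is to be nonnegative. -/
def acceptableSubCone (hu : IsCoherentUtility u) (hS : Convex ℝ S) (hne : S.Nonempty) :
    PointedCone ℝ (BddMeasurable Ω) where
  carrier := {X | ∃ t : ℝ, 0 ≤ t ∧ ∃ Y ∈ t • S, 0 ≤ u (X + Y)}
  zero_mem' := ⟨0, le_rfl, 0, by rw [zero_smul_set hne, Set.mem_zero], by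
    rw [add_zero, hu.map_zero]⟩
  add_mem' := by
    rintro X₁ X₂ ⟨t₁, ht₁, Y₁, hY₁, h₁⟩ ⟨t₂, ht₂, Y₂, hY₂, h₂⟩
    refine ⟨t₁ + t₂, add_nonneg ht₁ ht₂, Y₁ + Y₂, ?_, ?_⟩
    · rw [hS.add_smul ht₁ ht₂]
      exact add_mem_add hY₁ hY₂
    · rw [add_add_add_comm]
      exact (add_nonneg h₁ h₂).trans (hu.superadditive _ _)
  smul_mem' := by
    rintro ⟨c, hc⟩ X ⟨t, ht, Y, hY, h⟩
    refine ⟨c * t, mul_nonneg hc ht, c • Y, ?_, ?_⟩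
    · rw [mul_smul]
      exact smul_mem_smul_set hY
    · change 0 ≤ u (c • X + c • Y)
      rw [← smul_add, hu.map_smul c hc]
      exact mul_nonneg hc h

theorem exists_linearMap_nonpos (hu : IsCoherentUtility u) (hS : Convex ℝ S) (hne : S.Nonempty)
    (hneg : ∀ X ∈ S, u X ≤ 0) :
    ∃ g : BddMeasurable Ω →ₗ[ℝ] ℝ, g 1 = 1 ∧ (∀ X, u X ≤ g X) ∧ ∀ X ∈ S, g X ≤ 0 := by
  have hmap_smul_one : ∀ (X : BddMeasurable Ω) (c : ℝ), u (c • 1 + X) = u X + c := fun X c => by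
    rw [add_comm, ← Algebra.algebraMap_eq_smul_one, hu.map_add_const]
  have hone : (1 : BddMeasurable Ω) ≠ 0 := fun h => by
    have hu_one := hmap_smul_one 0 1
    rw [h, smul_zero, zero_add, hu.map_zero] at hu_one
    linarith
  have hmem : ∀ X, 0 ≤ u X → X ∈ hu.acceptableSubCone hS hne := fun X hX =>
    ⟨0, le_rfl, 0, by rw [zero_smul_set hne, Set.mem_zero], by rwa [add_zero]⟩
  let f : BddMeasurable Ω →ₗ.[ℝ] ℝ := .mkSpanSingleton 1 1 hone
  have hf : ∀ (c : ℝ) h, f ⟨c • 1, h⟩ = c := fun c h => by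
    rw [LinearPMap.mkSpanSingleton'_apply, RingHom.id_apply, smul_eq_mul, mul_one]
  obtain ⟨g, hgf, hg⟩ := riesz_extension (hu.acceptableSubCone hS hne) f
    (by
      rintro ⟨_, hx⟩ ⟨t, ht, _, ⟨Y, hY, rfl⟩, h⟩
      obtain ⟨c, rfl⟩ := Submodule.mem_span_singleton.1 hx
      rw [hf]
      rw [hmap_smul_one, hu.map_smul t ht] at h
      linarith [mul_nonpos_of_nonneg_of_nonpos ht (hneg Y hY)])
    fun X => ⟨⟨-u X • 1, Submodule.smul_mem _ _ (Submodule.mem_span_singleton_self 1)⟩, hmem _ (by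
      rw [hmap_smul_one, add_neg_cancel])⟩
  have hg_one : g 1 = 1 := (hgf ⟨1, Submodule.mem_span_singleton_self 1⟩).trans
    (LinearPMap.mkSpanSingleton_apply ℝ ℝ hone 1)
  refine ⟨g, hg_one, fun X => ?_, fun X hX => ?_⟩
  · have h := hg (-u X • 1 + X) (hmem _ (by rw [hmap_smul_one, add_neg_cancel]))
    rw [map_add, LinearMap.map_smul, hg_one, smul_eq_mul] at h
    linarith
  · have h := hg (-X) ⟨1, zero_le_one, X, by rwa [one_smul], by rw [neg_add_cancel, hu.map_zero]⟩
    rwa [map_neg, neg_nonneg] at h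

end IsCoherentUtility

theorem tendsto_map_indicator_of_forall_le {g : BddMeasurable Ω →ₗ[ℝ] ℝ} (hg : ∀ X, 0 ≤ X → 0 ≤ g X)
    {ε : ℕ → ℝ} (hε : ∀ n, 0 < ε n) {c : ℝ}
    (hgc : ∀ X, toL2 P X ∈ ⋂ n : ℕ, Metric.cthickening (ε n) (lInftyBall P n) → g X ≤ c)
    {A : ℕ → Set Ω} (hA : ∀ n, MeasurableSet (A n))
    (hlim : Tendsto (fun n => P (A n)) atTop (𝓝 0)) :
    Tendsto (fun n => g (.indicator (hA n))) atTop (𝓝 0) := by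
  refine tendsto_order.2 ⟨fun δ hδ => .of_forall fun n =>
    hδ.trans_le (BddMeasurable.map_indicator_nonneg hg (hA n)), fun δ hδ => ?_⟩
  let t : ℝ := (|c| + 1) / δ
  have ht : 0 ≤ t := by positivity
  have hbound : ∀ n ω, |(t • BddMeasurable.indicator (hA n)) ω| ≤ t := fun n ω => by
    change |t * (A n).indicator 1 ω| ≤ t
    by_cases hω : ω ∈ A n <;> simp [hω, abs_of_nonneg ht, ht]
  have hsmall : Tendsto (fun n => toL2 P (t • .indicator (hA n))) atTop (𝓝 0) := by
    simpa only [LinearMap.map_smul, smul_zero] using (tendsto_toL2_indicator hA hlim).const_smul t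
  filter_upwards [eventually_toL2_mem_iInter_cthickening hε hbound hsmall] with n hn
  have hle := hgc _ hn
  rw [LinearMap.map_smul, smul_eq_mul, div_mul_eq_mul_div, div_le_iff₀ hδ] at hle
  by_contra! hge
  have hmul := (mul_le_mul_of_nonneg_left hge (by positivity : 0 ≤ |c| + 1)).trans hle
  linarith [le_of_mul_le_mul_right hmul hδ, le_abs_self c]

theorem IsCoherentUtility.exists_measure_integral_nonpos (hu : IsCoherentUtility u)
    (hfatou : FatouProperty P u) {X : BddMeasurable Ω} (hX : u X < 0) :
    ∃ Q : Measure Ω, IsProbabilityMeasure Q ∧ Q ≪ P ∧ (∀ Y : BddMeasurable Ω, u Y ≤ ∫ ω, Y ω ∂Q) ∧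
      ∫ ω, X ω ∂Q ≤ 0 := by
  obtain ⟨ε, hε, hneg⟩ := exists_forall_neg_of_mem_iInter_cthickening hu hfatou hX
  let V : Set (BddMeasurable Ω) :=
    toL2 P ⁻¹' ⋂ n : ℕ, Metric.cthickening (ε n) (lInftyBall P n)
  have hV : Convex ℝ V :=
    (convex_iInter fun n => (convex_lInftyBall _).cthickening _).linear_preimage (toL2 P)
  have hzero : (0 : BddMeasurable Ω) ∈ V := mem_iInter.2 fun n =>
    Metric.self_subset_cthickening _ (toL2_mem_lInftyBall fun _ => abs_zero.trans_le n.cast_nonneg)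
  obtain ⟨g, hg_one, hug, hgV⟩ := hu.exists_linearMap_nonpos (hV.translate X)
    ⟨_, mem_image_of_mem _ hzero⟩ (forall_mem_image.2 fun Y hY => (hneg Y hY).le)
  rw [forall_mem_image] at hgV
  have hg : ∀ Y, 0 ≤ Y → 0 ≤ g Y := fun Y hY =>
    (hu.map_zero.symm.trans_le (hu.monotone hY)).trans (hug Y)
  have hgV_le : ∀ Y ∈ V, g Y ≤ -g X := fun Y hY => by
    have h := hgV hY
    rw [map_add] at h
    linarith
  obtain ⟨Q, _, hQP, hQ⟩ := BddMeasurable.exists_measure_forall_eq_integral (P := P) hg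
    fun A hA => tendsto_map_indicator_of_forall_le hg hε hgV_le hA
  have hQ_univ : Q.real univ = 1 :=
    (BddMeasurable.integralₗ_one Q).symm.trans ((hQ 1).symm.trans hg_one)
  refine ⟨Q, ⟨?_⟩, hQP, fun Y => (hug Y).trans_eq (hQ Y), ?_⟩
  · rwa [measureReal_def, ENNReal.toReal_eq_one_iff] at hQ_univ
  · simpa only [← hQ, add_zero] using hgV hzero

/-- The set of probability measures on `Ω` that are absolutely continuous with respect to `P`. -/
def acProbabilityMeasures (P : Measure Ω) : Set (Measure Ω) :=
  {Q | IsProbabilityMeasure Q ∧ Q ≪ P}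

theorem IsCoherentUtility.isGLB_integral (hu : IsCoherentUtility u) (hfatou : FatouProperty P u)
    (X : BddMeasurable Ω) :
    IsGLB ((fun Q : Measure Ω => ∫ ω, X ω ∂Q) ''
      {Q ∈ acProbabilityMeasures P | ∀ Y : BddMeasurable Ω, u Y ≤ ∫ ω, Y ω ∂Q}) (u X) := by
  refine ⟨forall_mem_image.2 fun Q hQ => hQ.2 X, fun c hc => le_of_forall_gt fun d hd => ?_⟩
  obtain ⟨e, hue, hed⟩ := exists_between hd
  have hneg : u (X + algebraMap ℝ _ (-e)) < 0 := by
    rw [hu.map_add_const]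
    linarith
  obtain ⟨Q, hQ_prob, hQP, hQ, hQX⟩ := hu.exists_measure_integral_nonpos hfatou hneg
  have hshift : ∫ ω, (X + algebraMap ℝ _ (-e)) ω ∂Q = ∫ ω, X ω ∂Q - e := by
    refine (integral_add (X.integrable Q) (integrable_const (-e))).trans ?_
    rw [integral_const, probReal_univ, one_smul, sub_eq_add_neg]
  rw [hshift] at hQX
  have hcX := hc (mem_image_of_mem _ ⟨⟨hQ_prob, hQP⟩, hQ⟩)
  linarith

theorem isCoherentUtility_and_fatouProperty_iff_exists_isGLB :
    IsCoherentUtility u ∧ FatouProperty P u ↔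
      ∃ 𝒬 ⊆ acProbabilityMeasures P, 𝒬.Nonempty ∧
        ∀ X : BddMeasurable Ω, IsGLB ((fun Q : Measure Ω => ∫ ω, X ω ∂Q) '' 𝒬) (u X) := by
  constructor
  · rintro ⟨hu, hfatou⟩
    have hglb := hu.isGLB_integral hfatou
    exact ⟨_, sep_subset _ _, (hglb 0).nonempty.of_image, hglb⟩
  · rintro ⟨𝒬, h𝒬, -, hglb⟩
    have (Q : 𝒬) : IsProbabilityMeasure Q.1 := (h𝒬 Q.2).1
    simp only [image_eq_range] at hglb
    exact ⟨isCoherentUtility_of_isGLB (g := fun Q : 𝒬 => BddMeasurable.integralₗ Q.1)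
        (fun Q X hX => integral_nonneg hX)
        (fun Q => (BddMeasurable.integralₗ_one Q.1).trans probReal_univ) hglb,
      fatouProperty_of_isGLB (fun Q => (h𝒬 Q.2).2) hglb⟩

end CoherentUtility

section Densities

variable {P : Measure Ω}

theorem image_withDensity_dens [SigmaFinite P] :
    (fun Z : Ω → ℝ => P.withDensity fun ω => ENNReal.ofReal (Z ω)) '' Dens P =
      acProbabilityMeasures P := by
  ext Q
  constructor
  · rintro ⟨Z, ⟨-, -, hZ_one⟩, rfl⟩
    exact ⟨⟨by rw [withDensity_apply _ .univ, Measure.restrict_univ, hZ_one]⟩,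
      withDensity_absolutelyContinuous P _⟩
  · rintro ⟨_, hQP⟩
    have hQ : P.withDensity (fun ω => ENNReal.ofReal (Q.rnDeriv P ω).toReal) = Q := by
      rw [withDensity_congr_ae (g := Q.rnDeriv P), Measure.withDensity_rnDeriv_eq Q P hQP]
      filter_upwards [Q.rnDeriv_lt_top P] with ω hω using ENNReal.ofReal_toReal hω.ne
    refine ⟨fun ω => (Q.rnDeriv P ω).toReal,
      ⟨(Q.measurable_rnDeriv P).ennreal_toReal, fun _ => ENNReal.toReal_nonneg, ?_⟩, hQ⟩
    rw [← setLIntegral_univ, ← withDensity_apply _ .univ, hQ, measure_univ]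

theorem eexp_eq_integral {Z X : Ω → ℝ} (hZX : Integrable (fun ω => Z ω * X ω) P) :
    eexp P Z X = ((∫ ω, Z ω * X ω ∂P : ℝ) : EReal) := by
  have hpos : ∫⁻ ω, ENNReal.ofReal (Z ω * X ω) ∂P ≠ ⊤ := hZX.lintegral_lt_top.ne
  have hneg : ∫⁻ ω, ENNReal.ofReal (-(Z ω * X ω)) ∂P ≠ ⊤ := hZX.neg.lintegral_lt_top.ne
  rw [eexp, if_neg hneg, integral_eq_lintegral_pos_part_sub_lintegral_neg_part hZX, EReal.coe_sub,
    EReal.coe_ennreal_toReal hpos, EReal.coe_ennreal_toReal hneg]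

theorem eexp_eq_integral_withDensity {Z : Ω → ℝ} (hZ : Z ∈ Dens P) (X : BddMeasurable Ω) :
    eexp P Z X = ((∫ ω, X ω ∂P.withDensity fun ω => ENNReal.ofReal (Z ω) : ℝ) : EReal) := by
  obtain ⟨hZ_meas, hZ_nonneg, hZ_one⟩ := hZ
  have hZ_int : Integrable Z P := ⟨hZ_meas.aestronglyMeasurable, by
    rw [hasFiniteIntegral_iff_ofReal (.of_forall hZ_nonneg), hZ_one]
    exact ENNReal.one_lt_top⟩
  obtain ⟨C, -, hC⟩ := X.exists_abs_le
  have hZX : Integrable (fun ω => Z ω * X ω) P :=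
    hZ_int.mul_bdd (c := C) X.measurable.aestronglyMeasurable (.of_forall hC)
  have hchange : ∫ ω, X ω ∂P.withDensity (fun ω => ENNReal.ofReal (Z ω)) = ∫ ω, Z ω * X ω ∂P := by
    rw [integral_withDensity_eq_integral_toReal_smul hZ_meas.ennreal_ofReal
      (.of_forall fun _ => ENNReal.ofReal_lt_top)]
    simp only [ENNReal.toReal_ofReal (hZ_nonneg _), smul_eq_mul]
  rw [hchange, eexp_eq_integral hZX]

theorem isGLB_image_coe_iff {s : Set ℝ} {r : ℝ} :
    IsGLB ((fun x : ℝ => (x : EReal)) '' s) r ↔ IsGLB s r := by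
  refine ⟨.of_image EReal.coe_le_coe_iff, fun h => ⟨forall_mem_image.2 fun x hx =>
    EReal.coe_le_coe_iff.2 (h.1 hx), fun b hb => ?_⟩⟩
  by_contra! hlt
  obtain ⟨d, hrd, hdb⟩ := EReal.lt_iff_exists_real_btwn.1 hlt
  refine (EReal.coe_lt_coe_iff.1 hrd).not_ge (h.2 fun x hx => ?_)
  exact EReal.coe_le_coe_iff.1 (hdb.le.trans (hb (mem_image_of_mem _ hx)))

theorem coe_eq_iInf_eexp_iff_isGLB {D : Set (Ω → ℝ)} (hD : D ⊆ Dens P) (X : BddMeasurable Ω)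
    {r : ℝ} : (r : EReal) = ⨅ Z ∈ D, eexp P Z X ↔
      IsGLB ((fun Q : Measure Ω => ∫ ω, X ω ∂Q) ''
        ((fun Z : Ω → ℝ => P.withDensity fun ω => ENNReal.ofReal (Z ω)) '' D)) r := by
  rw [← isGLB_image_coe_iff, image_image, image_image,
    ← image_congr fun Z hZ => eexp_eq_integral_withDensity (hD hZ) X, ← sInf_image]
  exact ⟨fun h => h ▸ isGLB_sInf _, fun h => h.sInf_eq.symm⟩

theorem isCoherentUtility_and_fatouProperty_iff_exists_eq_iInf_eexp [IsFiniteMeasure P]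
    {u : BddMeasurable Ω → ℝ} :
    IsCoherentUtility u ∧ FatouProperty P u ↔
      ∃ D ⊆ Dens P, D.Nonempty ∧
        ∀ X : BddMeasurable Ω, (u X : EReal) = ⨅ Z ∈ D, eexp P Z X := by
  rw [isCoherentUtility_and_fatouProperty_iff_exists_isGLB, ← image_withDensity_dens,
    exists_subset_image_iff]
  refine exists_congr fun D => and_congr_right fun hD => ?_
  simp only [image_nonempty, coe_eq_iInf_eexp_iff_isGLB hD]

end Densities

/-- Basic representation theorem.
A map `u` on `L^∞(Ω, ℱ, P)` satisfies superadditivity, monotonicity, positive homogeneity,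
translation invariance and the Fatou property if and only if it is of the form
`u(X) = inf_{Q ∈ D} E_Q[X]` for a nonempty set `D ⊆ 𝒫` of probability measures absolutely
continuous w.r.t. `P` (identified with their densities). -/
theorem stmt_0 (P : Measure Ω) [IsProbabilityMeasure P] (u : (Ω → ℝ) → ℝ) :
    ((∀ X Y : Ω → ℝ, Measurable X → (∃ C : ℝ, ∀ ω, |X ω| ≤ C) →
        Measurable Y → (∃ C : ℝ, ∀ ω, |Y ω| ≤ C) →
        u X + u Y ≤ u (fun ω => X ω + Y ω)) ∧
      (∀ X Y : Ω → ℝ, Measurable X → (∃ C : ℝ, ∀ ω, |X ω| ≤ C) →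
        Measurable Y → (∃ C : ℝ, ∀ ω, |Y ω| ≤ C) →
        (∀ ω, X ω ≤ Y ω) → u X ≤ u Y) ∧
      (∀ X : Ω → ℝ, Measurable X → (∃ C : ℝ, ∀ ω, |X ω| ≤ C) →
        ∀ c : ℝ, 0 ≤ c → u (fun ω => c * X ω) = c * u X) ∧
      (∀ X : Ω → ℝ, Measurable X → (∃ C : ℝ, ∀ ω, |X ω| ≤ C) →
        ∀ m : ℝ, u (fun ω => X ω + m) = u X + m) ∧
      (∀ (Xs : ℕ → Ω → ℝ) (X : Ω → ℝ), (∀ n, Measurable (Xs n)) →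
        (∀ n ω, |Xs n ω| ≤ 1) → Measurable X → (∃ C : ℝ, ∀ ω, |X ω| ≤ C) →
        TendstoInMeasure P Xs atTop X →
        Filter.limsup (fun n => u (Xs n)) atTop ≤ u X)) ↔
    ∃ D : Set (Ω → ℝ), D ⊆ Dens P ∧ D.Nonempty ∧
      ∀ X : Ω → ℝ, Measurable X → (∃ C : ℝ, ∀ ω, |X ω| ≤ C) →
        (u X : EReal) = ⨅ Z ∈ D, eexp P Z X := by
  have hrep := isCoherentUtility_and_fatouProperty_iff_exists_eq_iInf_eexp (P := P)
    (u := fun X : BddMeasurable Ω => u X)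
  constructor
  · rintro ⟨hsup, hmono, hsmul, hconst, hfatou⟩
    obtain ⟨D, hD, hne, hu⟩ := hrep.1
      ⟨{ superadditive := fun X Y => hsup X Y X.2.1 X.2.2 Y.2.1 Y.2.2
         monotone := fun X Y hXY => hmono X Y X.2.1 X.2.2 Y.2.1 Y.2.2 hXY
         map_smul := fun c hc X => hsmul X X.2.1 X.2.2 c hc
         map_add_const := fun X m => hconst X X.2.1 X.2.2 m },
        fun Xs X hXs hlim => hfatou _ X (fun n => (Xs n).2.1) hXs X.2.1 X.2.2 hlim⟩
    exact ⟨D, hD, hne, fun X hX hC => hu ⟨X, hX, hC⟩⟩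
  · rintro ⟨D, hD, hne, hD_inf⟩
    obtain ⟨hu, hfatou⟩ := hrep.2 ⟨D, hD, hne, fun X => hD_inf X X.2.1 X.2.2⟩
    exact ⟨fun X Y hX hXC hY hYC => hu.superadditive ⟨X, hX, hXC⟩ ⟨Y, hY, hYC⟩,
      fun X Y hX hXC hY hYC hXY => @hu.monotone ⟨X, hX, hXC⟩ ⟨Y, hY, hYC⟩ hXY,
      fun X hX hXC c hc => hu.map_smul c hc ⟨X, hX, hXC⟩,
      fun X hX hXC => hu.map_add_const ⟨X, hX, hXC⟩,
      fun Xs X hXs hXs_le hX hXC hlim =>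
        hfatou (fun n => ⟨Xs n, hXs n, 1, hXs_le n⟩) ⟨X, hX, hXC⟩ hXs_le hlim⟩
end

section
/- Let μ be a probability measure concentrated on (0,1] and let D_μ be the determining set of the Weighted V@R utility corresponding to μ. Then L^1_w(D_μ) = L^1_s(D_μ). -/
open MeasureTheory Filter Set
open scoped ENNReal

variable {Ω : Type*} [MeasurableSpace Ω]

/-- The determining set `D_λ = {Q ∈ 𝒫 : dQ/dP ≤ λ⁻¹}` of Tail V@R of order `λ`. -/
def TVDens (P : Measure Ω) (l : ℝ) : Set (Ω → ℝ) :=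
  {Z | Z ∈ Dens P ∧ ∀ ω, Z ω ≤ l⁻¹}

/-- Tail V@R utility `u_λ(X) = inf_{Q ∈ D_λ} E_Q[X]` as a real number (for bounded `X`). -/
noncomputable def tvU (P : Measure Ω) (l : ℝ) (X : Ω → ℝ) : ℝ :=
  sInf {r : ℝ | ∃ W ∈ TVDens P l, r = ∫ ω, W ω * X ω ∂P}

/-- The determining set of the Weighted V@R utility `u_μ(X) = ∫ u_λ(X) μ(dλ)` on `L^∞`:
all densities `Z ∈ 𝒫` with `E_Z[X] ≥ u_μ(X)` for every bounded measurable `X`. -/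
def WVDet (P : Measure Ω) (μ : Measure ℝ) : Set (Ω → ℝ) :=
  {Z | Z ∈ Dens P ∧ ∀ X : Ω → ℝ, Measurable X → (∃ C : ℝ, ∀ ω, |X ω| ≤ C) →
    (∫ l, tvU P l X ∂μ) ≤ ∫ ω, Z ω * X ω ∂P}


/-!
Write `S_λ V = sup_{Q ∈ D_λ} E_Q[V]` for `V ≥ 0`. Every `Q ∈ D_μ` satisfies
`E_Q[V] ≤ ∫ S_λ V μ(dλ)`, and conversely every mixture `∫ Q_λ μ(dλ)` with `Q_λ ∈ D_λ` belongs to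
`D_μ`. For `X` in the weak space, `E_Q|X|` is finite for the mixture `Q` of measurably selected,
near-optimal `Q_λ`, which makes `λ ↦ S_λ|X|` integrable with respect to `μ`. It dominates the tails
`S_λ(|X| 1_{|X| > n})`, and these are at most `λ⁻¹ E[|X| 1_{|X| > n}] → 0`, so their `μ`-integrals,
which bound the tails over `D_μ`, tend to zero.
-/

section UpperExpectation

/-- The upper expectation `sup_{Q ∈ D} E_Q[V]` of a `[0, ∞]`-valued random variable `V`; the
measures `Q` are represented by their densities. -/
noncomputable def upperExp (P : Measure Ω) (D : Set (Ω → ℝ)) (V : Ω → ℝ≥0∞) : ℝ≥0∞ :=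
  ⨆ Z ∈ D, ∫⁻ ω, ENNReal.ofReal (Z ω) * V ω ∂P

variable {P : Measure Ω} {D D' : Set (Ω → ℝ)} {V V' : Ω → ℝ≥0∞}

lemma lintegral_mul_le_upperExp {Z : Ω → ℝ} (hZ : Z ∈ D) :
    ∫⁻ ω, ENNReal.ofReal (Z ω) * V ω ∂P ≤ upperExp P D V :=
  le_iSup₂ (f := fun Z (_ : Z ∈ D) => ∫⁻ ω, ENNReal.ofReal (Z ω) * V ω ∂P) Z hZ

lemma upperExp_mono (hV : ∀ ω, V ω ≤ V' ω) : upperExp P D V ≤ upperExp P D V' :=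
  iSup₂_mono fun _ _ => lintegral_mono fun ω => by gcongr; exact hV ω

lemma upperExp_mono_set (hD : D ⊆ D') : upperExp P D V ≤ upperExp P D' V :=
  biSup_mono hD

lemma upperExp_add_le (hD : D ⊆ Dens P) (hV : Measurable V) :
    upperExp P D (fun ω => V ω + V' ω) ≤ upperExp P D V + upperExp P D V' := by
  refine iSup₂_le fun Z hZ => ?_
  have hm : Measurable fun ω => ENNReal.ofReal (Z ω) * V ω := (hD hZ).1.ennreal_ofReal.mul hV
  simp only [mul_add]
  rw [lintegral_add_left hm]
  exact add_le_add (lintegral_mul_le_upperExp hZ) (lintegral_mul_le_upperExp hZ)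

lemma upperExp_le_of_le_const (hD : D ⊆ Dens P) {c : ℝ≥0∞} (hV : ∀ ω, V ω ≤ c) :
    upperExp P D V ≤ c := by
  refine iSup₂_le fun Z hZ => ?_
  calc ∫⁻ ω, ENNReal.ofReal (Z ω) * V ω ∂P
      ≤ ∫⁻ ω, ENNReal.ofReal (Z ω) * c ∂P := lintegral_mono fun ω => by gcongr; exact hV ω
    _ = c := by rw [lintegral_mul_const _ (hD hZ).1.ennreal_ofReal, (hD hZ).2.2, one_mul]

lemma exists_mem_upperExp_le_two_mul (hD : D.Nonempty) (hV : upperExp P D V ≠ ⊤) :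
    ∃ Z ∈ D, upperExp P D V ≤ 2 * ∫⁻ ω, ENNReal.ofReal (Z ω) * V ω ∂P := by
  rcases eq_or_ne (upperExp P D V) 0 with hzero | hpos
  · obtain ⟨Z, hZ⟩ := hD
    exact ⟨Z, hZ, by simp [hzero]⟩
  · obtain ⟨Z, hZ, hlt⟩ : ∃ Z ∈ D, upperExp P D V / 2 < ∫⁻ ω, ENNReal.ofReal (Z ω) * V ω ∂P := by
      simpa only [upperExp, lt_iSup_iff, exists_prop] using ENNReal.half_lt_self hpos hV
    exact ⟨Z, hZ, ENNReal.div_le_iff_le_mul (by simp) (by simp) |>.1 hlt.le |>.trans_eq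
      (mul_comm _ _)⟩

end UpperExpectation

section Densities

variable {P : Measure Ω} {D : Set (Ω → ℝ)} {Z X : Ω → ℝ}

lemma integrable_of_mem_Dens (hZ : Z ∈ Dens P) : Integrable Z P := by
  refine ⟨hZ.1.aestronglyMeasurable, ?_⟩
  rw [hasFiniteIntegral_iff_ofReal (ae_of_all _ hZ.2.1), hZ.2.2]
  exact ENNReal.one_lt_top

lemma mem_Dens_iff : Z ∈ Dens P ↔ Measurable Z ∧ (∀ ω, 0 ≤ Z ω) ∧ ∫ ω, Z ω ∂P = 1 := by
  refine ⟨fun hZ => ⟨hZ.1, hZ.2.1, ?_⟩, fun ⟨hm, hnonneg, hone⟩ => ⟨hm, hnonneg, ?_⟩⟩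
  · rw [integral_eq_lintegral_of_nonneg_ae (ae_of_all _ hZ.2.1) hZ.1.aestronglyMeasurable,
      hZ.2.2, ENNReal.toReal_one]
  · have hint : Integrable Z P := .of_integral_ne_zero (hone ▸ one_ne_zero)
    rw [← ofReal_integral_eq_lintegral_ofReal hint (ae_of_all _ hnonneg), hone, ENNReal.ofReal_one]

lemma one_mem_Dens (P : Measure Ω) [IsProbabilityMeasure P] : (fun _ => (1 : ℝ)) ∈ Dens P :=
  ⟨measurable_const, fun _ => zero_le_one, by simp⟩

lemma lintegral_ofReal_mul_enorm (hZ : ∀ ω, 0 ≤ Z ω) :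
    ∫⁻ ω, ENNReal.ofReal (Z ω) * ‖X ω‖ₑ ∂P = ∫⁻ ω, ENNReal.ofReal (Z ω * |X ω|) ∂P :=
  lintegral_congr fun ω => by rw [ENNReal.ofReal_mul (hZ ω), Real.enorm_eq_ofReal_abs]

lemma enorm_integral_mul_le (hZ : ∀ ω, 0 ≤ Z ω) :
    ‖∫ ω, Z ω * X ω ∂P‖ₑ ≤ ∫⁻ ω, ENNReal.ofReal (Z ω) * ‖X ω‖ₑ ∂P := by
  refine (enorm_integral_le_lintegral_enorm _).trans_eq (lintegral_congr fun ω => ?_)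
  rw [enorm_mul, Real.enorm_of_nonneg (hZ ω)]

lemma enorm_integral_mul_of_nonneg (hZ : Z ∈ Dens P) (hXm : Measurable X)
    (hX : ∀ ω, 0 ≤ X ω) {C : ℝ} (hC : ∀ ω, |X ω| ≤ C) :
    ‖∫ ω, Z ω * X ω ∂P‖ₑ = ∫⁻ ω, ENNReal.ofReal (Z ω) * ‖X ω‖ₑ ∂P := by
  have hint : Integrable (fun ω => Z ω * X ω) P :=
    (integrable_of_mem_Dens hZ).mul_bdd (c := C) hXm.aestronglyMeasurable (ae_of_all _ hC)
  have hnonneg : ∀ ω, 0 ≤ Z ω * X ω := fun ω => mul_nonneg (hZ.2.1 ω) (hX ω)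
  rw [Real.enorm_of_nonneg (integral_nonneg hnonneg),
    ofReal_integral_eq_lintegral_ofReal hint (ae_of_all _ hnonneg),
    lintegral_ofReal_mul_enorm hZ.2.1]
  simp only [abs_of_nonneg (hX _)]

lemma abs_integral_mul_le_toReal_upperExp (hD : D ⊆ Dens P) (hZ : Z ∈ D)
    (hX : upperExp P D (fun ω => ‖X ω‖ₑ) ≠ ⊤) :
    |∫ ω, Z ω * X ω ∂P| ≤ (upperExp P D fun ω => ‖X ω‖ₑ).toReal := by
  rw [← Real.norm_eq_abs, ← toReal_enorm]
  exact ENNReal.toReal_mono hX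
    ((enorm_integral_mul_le (hD hZ).2.1).trans (lintegral_mul_le_upperExp hZ))

lemma upperExp_enorm_le (hD : D ⊆ Dens P) {C : ℝ} (hC : ∀ ω, |X ω| ≤ C) :
    upperExp P D (fun ω => ‖X ω‖ₑ) ≤ ENNReal.ofReal C :=
  upperExp_le_of_le_const hD fun ω => by
    rw [Real.enorm_eq_ofReal_abs]; exact ENNReal.ofReal_le_ofReal (hC ω)

end Densities

section TailVaR

variable {P : Measure Ω} {κ l : ℝ} {X : Ω → ℝ} {V : Ω → ℝ≥0∞}

lemma TVDens_subset_Dens : TVDens P l ⊆ Dens P := fun _ hZ => hZ.1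

lemma one_mem_TVDens (P : Measure Ω) [IsProbabilityMeasure P] (hl : l ∈ Ioc (0 : ℝ) 1) :
    (fun _ => (1 : ℝ)) ∈ TVDens P l :=
  ⟨one_mem_Dens P, fun _ => (one_le_inv₀ hl.1).2 hl.2⟩

lemma TVDens_anti (hκ : 0 < κ) (hκl : κ ≤ l) : TVDens P l ⊆ TVDens P κ :=
  fun _ hZ => ⟨hZ.1, fun ω => (hZ.2 ω).trans (inv_anti₀ hκ hκl)⟩

lemma antitoneOn_upperExp_TVDens (P : Measure Ω) (V : Ω → ℝ≥0∞) :
    AntitoneOn (fun l => upperExp P (TVDens P l) V) (Ioc 0 1) :=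
  fun _ hκ _ _ hκl => upperExp_mono_set (TVDens_anti hκ.1 hκl)

lemma upperExp_TVDens_le (P : Measure Ω) (l : ℝ) (V : Ω → ℝ≥0∞) :
    upperExp P (TVDens P l) V ≤ ENNReal.ofReal l⁻¹ * ∫⁻ ω, V ω ∂P := by
  refine iSup₂_le fun Z hZ => ?_
  rw [← lintegral_const_mul' _ _ ENNReal.ofReal_ne_top]
  exact lintegral_mono fun ω => by gcongr; exact hZ.2 ω

lemma exists_mem_TVDens_le_mul [IsProbabilityMeasure P] {W : Ω → ℝ} (hW : W ∈ TVDens P κ)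
    (hκ : 0 < κ) (hκl : κ ≤ l) (hl : l ≤ 1) : ∃ Z ∈ TVDens P l, ∀ ω, W ω ≤ l / κ * Z ω := by
  have hl0 : 0 < l := hκ.trans_le hκl
  -- `(κ / l) W` has mass `κ / l`; moving it a fraction `t` of the way up to `l⁻¹` restores mass
  -- one. When `κ = 1` this reads `t = 0 / 0 = 0`, as it should.
  set t : ℝ := (l - κ) / (1 - κ)
  have ht0 : 0 ≤ t := div_nonneg (by linarith) (by linarith)
  have ht1 : t ≤ 1 := div_le_one_of_le₀ (by linarith) (by linarith)
  have hmass : κ / l + t * (l⁻¹ - κ / l) = 1 := by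
    rcases eq_or_lt_of_le (hκl.trans hl) with rfl | hκ1
    · simp [le_antisymm hl hκl]
    · simp only [t]
      field_simp [(sub_pos.2 hκ1).ne']
      ring
  have hle : ∀ ω, κ / l * W ω ≤ l⁻¹ := fun ω => by
    calc κ / l * W ω ≤ κ / l * κ⁻¹ := by gcongr; exact hW.2 ω
      _ = l⁻¹ := by field_simp
  obtain ⟨hm, hnonneg, hone⟩ := mem_Dens_iff.1 hW.1
  have hint := integrable_of_mem_Dens hW.1
  refine ⟨fun ω => κ / l * W ω + t * (l⁻¹ - κ / l * W ω),
    ⟨mem_Dens_iff.2 ⟨by fun_prop, fun ω => ?_, ?_⟩, fun ω => ?_⟩, fun ω => ?_⟩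
  · have := hnonneg ω
    have := sub_nonneg.2 (hle ω)
    positivity
  · rw [integral_add (by fun_prop) (by fun_prop), integral_const_mul, integral_const_mul,
      integral_sub (by fun_prop) (by fun_prop), integral_const_mul, hone]
    simpa using hmass
  · nlinarith [hle ω]
  · calc W ω = l / κ * (κ / l * W ω) := by field_simp
      _ ≤ l / κ * (κ / l * W ω + t * (l⁻¹ - κ / l * W ω)) := by
        gcongr
        exact le_add_of_nonneg_right (mul_nonneg ht0 (sub_nonneg.2 (hle ω)))

lemma upperExp_TVDens_le_mul [IsProbabilityMeasure P] (hκ : 0 < κ) (hκl : κ ≤ l) (hl : l ≤ 1) :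
    upperExp P (TVDens P κ) V ≤ ENNReal.ofReal (l / κ) * upperExp P (TVDens P l) V := by
  refine iSup₂_le fun W hW => ?_
  obtain ⟨Z, hZ, hWZ⟩ := exists_mem_TVDens_le_mul hW hκ hκl hl
  calc ∫⁻ ω, ENNReal.ofReal (W ω) * V ω ∂P
      ≤ ∫⁻ ω, ENNReal.ofReal (l / κ) * (ENNReal.ofReal (Z ω) * V ω) ∂P := by
        refine lintegral_mono fun ω => ?_
        rw [← mul_assoc, ← ENNReal.ofReal_mul' (hZ.1.2.1 ω)]
        gcongr
        exact hWZ ω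
    _ = ENNReal.ofReal (l / κ) * ∫⁻ ω, ENNReal.ofReal (Z ω) * V ω ∂P :=
        lintegral_const_mul' _ _ ENNReal.ofReal_ne_top
    _ ≤ ENNReal.ofReal (l / κ) * upperExp P (TVDens P l) V := by
        gcongr
        exact lintegral_mul_le_upperExp hZ

lemma inv_floor_add_one_mem_Icc (hl : l ∈ Ioc (0 : ℝ) 1) :
    ((⌊l⁻¹ - 1⌋₊ : ℝ) + 1)⁻¹ ∈ Icc l (2 * l) := by
  have hle := Nat.floor_le (sub_nonneg.2 ((one_le_inv₀ hl.1).2 hl.2))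
  have hlt := Nat.lt_floor_add_one (l⁻¹ - 1)
  constructor
  · exact (le_inv_comm₀ hl.1 (by positivity)).2 (by linarith)
  · rw [inv_le_comm₀ (by positivity) (by linarith [hl.1]), mul_inv]
    linarith

/-- Choosing near-optimal densities only at the countably many orders `1 / (n + 1)`, and rounding
`l` up to the next such order, makes the selection jointly measurable. -/
lemma exists_measurable_upperExp_TVDens_le [IsProbabilityMeasure P] (hV : ∫⁻ ω, V ω ∂P ≠ ⊤) :
    ∃ W : ℝ → Ω → ℝ, Measurable (Function.uncurry W) ∧ ∀ l ∈ Ioc (0 : ℝ) 1, W l ∈ TVDens P l ∧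
      upperExp P (TVDens P l) V ≤ 4 * ∫⁻ ω, ENNReal.ofReal (W l ω) * V ω ∂P := by
  have horder : ∀ n : ℕ, ((n : ℝ) + 1)⁻¹ ∈ Ioc (0 : ℝ) 1 := fun n =>
    ⟨by positivity, inv_le_one_of_one_le₀ (by simp)⟩
  have hopt : ∀ n : ℕ, ∃ W ∈ TVDens P ((n : ℝ) + 1)⁻¹,
      upperExp P (TVDens P ((n : ℝ) + 1)⁻¹) V ≤ 2 * ∫⁻ ω, ENNReal.ofReal (W ω) * V ω ∂P := fun n =>
    exists_mem_upperExp_le_two_mul ⟨_, one_mem_TVDens P (horder n)⟩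
      (ne_top_of_le_ne_top (by finiteness) (upperExp_TVDens_le P _ V))
  choose W hW hWV using hopt
  refine ⟨fun l => W ⌊l⁻¹ - 1⌋₊, ?_, fun l hl => ?_⟩
  · have hWm : Measurable (Function.uncurry W) :=
      measurable_from_prod_countable_right fun n => (hW n).1.1
    have hfloor : Measurable fun p : ℝ × Ω => ⌊p.1⁻¹ - 1⌋₊ :=
      Nat.measurable_floor.comp (by fun_prop)
    exact hWm.comp (hfloor.prodMk measurable_snd)
  · have hround := inv_floor_add_one_mem_Icc hl
    refine ⟨TVDens_anti hl.1 hround.1 (hW _), ?_⟩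
    set r : ℝ := ((⌊l⁻¹ - 1⌋₊ : ℝ) + 1)⁻¹
    calc upperExp P (TVDens P l) V
        ≤ ENNReal.ofReal (r / l) * upperExp P (TVDens P r) V :=
          upperExp_TVDens_le_mul hl.1 hround.1 (horder _).2
      _ ≤ 2 * (2 * ∫⁻ ω, ENNReal.ofReal (W ⌊l⁻¹ - 1⌋₊ ω) * V ω ∂P) := by
          gcongr
          · exact ENNReal.ofReal_le_ofNat.2 ((div_le_iff₀ hl.1).2 hround.2)
          · exact hWV _
      _ = 4 * ∫⁻ ω, ENNReal.ofReal (W ⌊l⁻¹ - 1⌋₊ ω) * V ω ∂P := by rw [← mul_assoc]; norm_num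

lemma tvU_le {Z : Ω → ℝ} (hX : upperExp P (TVDens P l) (fun ω => ‖X ω‖ₑ) ≠ ⊤)
    (hZ : Z ∈ TVDens P l) : tvU P l X ≤ ∫ ω, Z ω * X ω ∂P := by
  refine csInf_le ⟨-(upperExp P (TVDens P l) fun ω => ‖X ω‖ₑ).toReal, ?_⟩ ⟨Z, hZ, rfl⟩
  rintro r ⟨W, hW, rfl⟩
  exact (abs_le.1 (abs_integral_mul_le_toReal_upperExp TVDens_subset_Dens hW hX)).1

lemma le_tvU [IsProbabilityMeasure P] (hl : l ∈ Ioc (0 : ℝ) 1) {a : ℝ}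
    (h : ∀ Z ∈ TVDens P l, a ≤ ∫ ω, Z ω * X ω ∂P) : a ≤ tvU P l X := by
  refine le_csInf ⟨_, _, one_mem_TVDens P hl, rfl⟩ ?_
  rintro r ⟨Z, hZ, rfl⟩
  exact h Z hZ

lemma monotoneOn_tvU [IsProbabilityMeasure P]
    (hX : ∀ l ∈ Ioc (0 : ℝ) 1, upperExp P (TVDens P l) (fun ω => ‖X ω‖ₑ) ≠ ⊤) :
    MonotoneOn (fun l => tvU P l X) (Ioc 0 1) :=
  fun _ hκ _ hl hκl => le_tvU hl fun _ hZ => tvU_le (hX _ hκ) (TVDens_anti hκ.1 hκl hZ)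

lemma enorm_tvU_le [IsProbabilityMeasure P] (hl : l ∈ Ioc (0 : ℝ) 1) :
    ‖tvU P l X‖ₑ ≤ upperExp P (TVDens P l) fun ω => ‖X ω‖ₑ := by
  by_cases hX : upperExp P (TVDens P l) (fun ω => ‖X ω‖ₑ) = ⊤
  · exact hX ▸ le_top
  have hbound : ∀ Z ∈ TVDens P l,
      |∫ ω, Z ω * X ω ∂P| ≤ (upperExp P (TVDens P l) fun ω => ‖X ω‖ₑ).toReal := fun Z hZ =>
    abs_integral_mul_le_toReal_upperExp TVDens_subset_Dens hZ hX
  have hone := one_mem_TVDens P hl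
  rw [Real.enorm_eq_ofReal_abs]
  exact ENNReal.ofReal_le_of_le_toReal (abs_le.2
    ⟨le_tvU hl fun Z hZ => neg_le_of_abs_le (hbound Z hZ),
      (tvU_le hX hone).trans (le_of_abs_le (hbound _ hone))⟩)

end TailVaR

section Mixture

variable {ι : Type*} [MeasurableSpace ι] {P : Measure Ω} {ν : Measure ι} {W : ι → Ω → ℝ}

/-- The density `∫ W i ν(di)` of the mixture over `ν` of the measures with densities `W i`. -/
noncomputable def mixture {α : Type*} (ν : Measure ι) (W : ι → α → ℝ) (ω : α) : ℝ :=
  ∫ i, W i ω ∂ν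

lemma integrable_uncurry_of_ae_mem_Dens [IsFiniteMeasure ν] [SFinite P]
    (hWm : Measurable (Function.uncurry W)) (hW : ∀ᵐ i ∂ν, W i ∈ Dens P) :
    Integrable (Function.uncurry W) (ν.prod P) := by
  refine ⟨hWm.aestronglyMeasurable, ?_⟩
  have hnorm : ∀ᵐ i ∂ν, ∫⁻ ω, ‖W i ω‖ₑ ∂P = 1 := by
    filter_upwards [hW] with i hi
    simp only [Real.enorm_of_nonneg (hi.2.1 _), hi.2.2]
  rw [hasFiniteIntegral_iff_enorm, lintegral_prod _ hWm.enorm.aemeasurable]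
  simp only [Function.uncurry_apply_pair]
  rw [lintegral_congr_ae hnorm, lintegral_one]
  exact measure_lt_top ν univ

lemma integral_mixture_mul [IsFiniteMeasure ν] [SFinite P]
    (hWm : Measurable (Function.uncurry W)) (hW : ∀ᵐ i ∂ν, W i ∈ Dens P) {X : Ω → ℝ}
    (hX : Measurable X) {C : ℝ} (hC : ∀ ω, |X ω| ≤ C) :
    Integrable (fun i => ∫ ω, W i ω * X ω ∂P) ν ∧
      ∫ ω, mixture ν W ω * X ω ∂P = ∫ i, ∫ ω, W i ω * X ω ∂P ∂ν := by
  have hint : Integrable (fun p : ι × Ω => W p.1 p.2 * X p.2) (ν.prod P) :=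
    (integrable_uncurry_of_ae_mem_Dens hWm hW).mul_bdd (c := C)
      (hX.comp measurable_snd).aestronglyMeasurable (ae_of_all _ fun p => hC p.2)
  refine ⟨hint.integral_prod_left, ?_⟩
  rw [integral_integral_swap hint]
  simp only [mixture, integral_mul_const]

lemma mixture_mem_Dens [IsProbabilityMeasure ν] [SFinite P]
    (hWm : Measurable (Function.uncurry W)) (hW : ∀ᵐ i ∂ν, W i ∈ Dens P) :
    mixture ν W ∈ Dens P := by
  refine mem_Dens_iff.2 ⟨?_, fun ω => ?_, ?_⟩
  · exact (hWm.comp measurable_swap).stronglyMeasurable.integral_prod_right'.measurable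
  · exact integral_nonneg_of_ae (hW.mono fun i hi => hi.2.1 ω)
  · have hone : ∀ᵐ i ∂ν, ∫ ω, W i ω ∂P = 1 := hW.mono fun i hi => (mem_Dens_iff.1 hi).2.2
    have h := (integral_mixture_mul hWm hW (X := fun _ => 1) measurable_const (C := 1) (by simp)).2
    simpa [integral_congr_ae hone] using h

lemma lintegral_mixture_mul [IsFiniteMeasure ν] [SFinite P]
    (hWm : Measurable (Function.uncurry W)) (hW : ∀ᵐ i ∂ν, W i ∈ Dens P) {V : Ω → ℝ≥0∞}
    (hV : Measurable V) :
    ∫⁻ ω, ENNReal.ofReal (mixture ν W ω) * V ω ∂P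
      = ∫⁻ i, ∫⁻ ω, ENNReal.ofReal (W i ω) * V ω ∂P ∂ν := by
  have hmix : ∀ᵐ ω ∂P, ENNReal.ofReal (mixture ν W ω) = ∫⁻ i, ENNReal.ofReal (W i ω) ∂ν := by
    filter_upwards [(integrable_uncurry_of_ae_mem_Dens hWm hW).prod_left_ae] with ω hω
    exact ofReal_integral_eq_lintegral_ofReal hω (hW.mono fun i hi => hi.2.1 ω)
  have hm : Measurable fun p : ι × Ω => ENNReal.ofReal (W p.1 p.2) := hWm.ennreal_ofReal
  rw [lintegral_lintegral_swap (hm.mul (hV.comp measurable_snd)).aemeasurable]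
  refine lintegral_congr_ae (hmix.mono fun ω hω => ?_)
  have hsection : Measurable fun i => ENNReal.ofReal (W i ω) := hm.comp measurable_prodMk_right
  dsimp only
  rw [hω, lintegral_mul_const _ hsection]

end Mixture

section WeightedVaR

variable {P : Measure Ω} [IsProbabilityMeasure P] {μ : Measure ℝ} {X Z : Ω → ℝ} {V : Ω → ℝ≥0∞}

lemma WVDet_subset_Dens {P : Measure Ω} : WVDet P μ ⊆ Dens P := fun _ hZ => hZ.1

lemma aemeasurable_upperExp_TVDens {P : Measure Ω} (hμ : ∀ᵐ l ∂μ, l ∈ Ioc (0 : ℝ) 1)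
    (V : Ω → ℝ≥0∞) : AEMeasurable (fun l => upperExp P (TVDens P l) V) μ := by
  have h := aemeasurable_restrict_of_antitoneOn (μ := μ) measurableSet_Ioc
    (antitoneOn_upperExp_TVDens P V)
  rwa [Measure.restrict_eq_self_of_ae_mem hμ] at h

lemma integrable_tvU [IsFiniteMeasure μ] (hμ : ∀ᵐ l ∂μ, l ∈ Ioc (0 : ℝ) 1) {C : ℝ}
    (hC : ∀ ω, |X ω| ≤ C) : Integrable (fun l => tvU P l X) μ := by
  have hX : ∀ l, upperExp P (TVDens P l) (fun ω => ‖X ω‖ₑ) ≤ ENNReal.ofReal C := fun _ =>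
    upperExp_enorm_le TVDens_subset_Dens hC
  have hm := aemeasurable_restrict_of_monotoneOn (μ := μ) measurableSet_Ioc
    (monotoneOn_tvU fun l _ => ne_top_of_le_ne_top ENNReal.ofReal_ne_top (hX l))
  rw [Measure.restrict_eq_self_of_ae_mem hμ] at hm
  exact ⟨hm.aestronglyMeasurable, .of_bounded_enorm ENNReal.ofReal_ne_top
    (hμ.mono fun l hl => (enorm_tvU_le hl).trans (hX l))⟩

lemma mixture_mem_WVDet [IsProbabilityMeasure μ] (hμ : ∀ᵐ l ∂μ, l ∈ Ioc (0 : ℝ) 1)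
    {W : ℝ → Ω → ℝ} (hWm : Measurable (Function.uncurry W)) (hW : ∀ᵐ l ∂μ, W l ∈ TVDens P l) :
    mixture μ W ∈ WVDet P μ := by
  have hWD : ∀ᵐ l ∂μ, W l ∈ Dens P := hW.mono fun _ hl => hl.1
  refine ⟨mixture_mem_Dens hWm hWD, ?_⟩
  rintro X hX ⟨C, hC⟩
  obtain ⟨hint, hmix⟩ := integral_mixture_mul hWm hWD hX hC
  rw [hmix]
  refine integral_mono_ae (integrable_tvU hμ hC) hint (hW.mono fun l hl => tvU_le ?_ hl)
  exact ne_top_of_le_ne_top ENNReal.ofReal_ne_top (upperExp_enorm_le TVDens_subset_Dens hC)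

lemma one_mem_WVDet [IsProbabilityMeasure μ] (hμ : ∀ᵐ l ∂μ, l ∈ Ioc (0 : ℝ) 1) :
    (fun _ => (1 : ℝ)) ∈ WVDet P μ := by
  have hmix : mixture μ (fun _ _ => 1) = fun _ : Ω => (1 : ℝ) := by ext; simp [mixture]
  rw [← hmix]
  exact mixture_mem_WVDet hμ measurable_const (hμ.mono fun l hl => one_mem_TVDens P hl)

lemma lintegral_mul_enorm_le_of_mem_WVDet (hμ : ∀ᵐ l ∂μ, l ∈ Ioc (0 : ℝ) 1)
    (hZ : Z ∈ WVDet P μ) (hXm : Measurable X) (hX : ∀ ω, 0 ≤ X ω) {C : ℝ}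
    (hC : ∀ ω, |X ω| ≤ C) :
    ∫⁻ ω, ENNReal.ofReal (Z ω) * ‖X ω‖ₑ ∂P
      ≤ ∫⁻ l, upperExp P (TVDens P l) (fun ω => ‖X ω‖ₑ) ∂μ := by
  have hutility : ∫ l, tvU P l (fun ω => -X ω) ∂μ ≤ -∫ ω, Z ω * X ω ∂P := by
    simpa only [mul_neg, integral_neg] using hZ.2 (fun ω => -X ω) hXm.neg ⟨C, by simpa using hC⟩
  have hnonneg : 0 ≤ ∫ ω, Z ω * X ω ∂P := integral_nonneg fun ω => mul_nonneg (hZ.1.2.1 ω) (hX ω)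
  calc ∫⁻ ω, ENNReal.ofReal (Z ω) * ‖X ω‖ₑ ∂P
      = ‖∫ ω, Z ω * X ω ∂P‖ₑ := (enorm_integral_mul_of_nonneg hZ.1 hXm hX hC).symm
    _ ≤ ‖∫ l, tvU P l (fun ω => -X ω) ∂μ‖ₑ := by
        rw [enorm_le_iff_norm_le, Real.norm_of_nonneg hnonneg]
        exact (le_neg_of_le_neg hutility).trans (neg_le_abs _)
    _ ≤ ∫⁻ l, ‖tvU P l (fun ω => -X ω)‖ₑ ∂μ := enorm_integral_le_lintegral_enorm _
    _ ≤ ∫⁻ l, upperExp P (TVDens P l) (fun ω => ‖X ω‖ₑ) ∂μ :=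
        lintegral_mono_ae (hμ.mono fun l hl => by
          simpa only [enorm_neg] using enorm_tvU_le (X := fun ω => -X ω) hl)

lemma upperExp_WVDet_le (hμ : ∀ᵐ l ∂μ, l ∈ Ioc (0 : ℝ) 1) (hV : Measurable V) :
    upperExp P (WVDet P μ) V ≤ ∫⁻ l, upperExp P (TVDens P l) V ∂μ := by
  refine iSup₂_le fun Z hZ => ?_
  have htrunc : ∀ (n : ℕ) ω, ‖(V ω ⊓ n).toReal‖ₑ = V ω ⊓ n := fun n ω =>
    Real.enorm_toReal (ne_top_of_le_ne_top (ENNReal.natCast_ne_top n) inf_le_right)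
  have hbounded : ∀ n : ℕ, ∫⁻ ω, ENNReal.ofReal (Z ω) * (V ω ⊓ n) ∂P
      ≤ ∫⁻ l, upperExp P (TVDens P l) V ∂μ := fun n => by
    have h := lintegral_mul_enorm_le_of_mem_WVDet hμ hZ (X := fun ω => (V ω ⊓ n).toReal)
      (hV.min measurable_const).ennreal_toReal (fun _ => ENNReal.toReal_nonneg) (C := n) fun ω => by
        rw [abs_of_nonneg ENNReal.toReal_nonneg]
        exact ENNReal.toReal_le_of_le_ofReal n.cast_nonneg (by simp)
    simp only [htrunc] at h
    exact h.trans (lintegral_mono fun l => upperExp_mono fun ω => inf_le_left)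
  have hsup : ∀ ω, ENNReal.ofReal (Z ω) * V ω = ⨆ n : ℕ, ENNReal.ofReal (Z ω) * (V ω ⊓ n) :=
    fun ω => by rw [← ENNReal.mul_iSup, ← inf_iSup_eq, ENNReal.iSup_natCast, inf_top_eq]
  have hm : ∀ n : ℕ, Measurable fun ω => ENNReal.ofReal (Z ω) * (V ω ⊓ n) := fun n =>
    hZ.1.1.ennreal_ofReal.mul (hV.min measurable_const)
  simp only [hsup]
  rw [lintegral_iSup hm fun m n hmn ω => by dsimp only; gcongr]
  exact iSup_le hbounded

lemma lintegral_upperExp_TVDens_ne_top [IsProbabilityMeasure μ]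
    (hμ : ∀ᵐ l ∂μ, l ∈ Ioc (0 : ℝ) 1) (hV : Measurable V)
    (hfin : ∀ Z ∈ WVDet P μ, ∫⁻ ω, ENNReal.ofReal (Z ω) * V ω ∂P ≠ ⊤) :
    ∫⁻ l, upperExp P (TVDens P l) V ∂μ ≠ ⊤ := by
  have hVint : ∫⁻ ω, V ω ∂P ≠ ⊤ := by simpa using hfin _ (one_mem_WVDet hμ)
  obtain ⟨W, hWm, hW⟩ := exists_measurable_upperExp_TVDens_le hVint
  have hWmem : ∀ᵐ l ∂μ, W l ∈ TVDens P l := hμ.mono fun l hl => (hW l hl).1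
  have hmix := hfin _ (mixture_mem_WVDet hμ hWm hWmem)
  refine ne_top_of_le_ne_top (ENNReal.mul_ne_top (ENNReal.ofNat_ne_top (n := 4)) hmix) ?_
  rw [lintegral_mixture_mul hWm (hWmem.mono fun l hl => hl.1) hV,
    ← lintegral_const_mul' _ _ ENNReal.ofNat_ne_top]
  exact lintegral_mono_ae (hμ.mono fun l hl => (hW l hl).2)

lemma tendsto_upperExp_WVDet_zero (hμ : ∀ᵐ l ∂μ, l ∈ Ioc (0 : ℝ) 1) {T : ℕ → Ω → ℝ≥0∞}
    (hT : ∀ n, Measurable (T n)) (hTV : ∀ n ω, T n ω ≤ V ω)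
    (hV : ∫⁻ l, upperExp P (TVDens P l) V ∂μ ≠ ⊤)
    (hlim : Tendsto (fun n => ∫⁻ ω, T n ω ∂P) atTop (nhds 0)) :
    Tendsto (fun n => upperExp P (WVDet P μ) (T n)) atTop (nhds 0) := by
  have hlevel : ∀ l, Tendsto (fun n => upperExp P (TVDens P l) (T n)) atTop (nhds 0) := fun l => by
    refine tendsto_of_tendsto_of_tendsto_of_le_of_le tendsto_const_nhds ?_ (fun _ => zero_le)
      fun n => upperExp_TVDens_le P l (T n)
    simpa using ENNReal.Tendsto.const_mul hlim (Or.inr ENNReal.ofReal_ne_top)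
  have hdom : Tendsto (fun n => ∫⁻ l, upperExp P (TVDens P l) (T n) ∂μ) atTop (nhds 0) := by
    simpa using tendsto_lintegral_of_dominated_convergence' _
      (fun n => aemeasurable_upperExp_TVDens hμ (T n))
      (fun n => ae_of_all _ fun l => upperExp_mono (hTV n)) hV (ae_of_all _ hlevel)
  exact tendsto_of_tendsto_of_tendsto_of_le_of_le tendsto_const_nhds hdom (fun _ => zero_le)
    fun n => upperExp_WVDet_le hμ (hT n)

end WeightedVaR

section WeakAndStrong

variable {α : Type*} {P : Measure Ω} {D : Set (Ω → ℝ)} {X Z : Ω → ℝ}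

/-- The part of `|X|` carried by `{|X| > n}`. -/
noncomputable def absTail (X : α → ℝ) (n : ℕ) : α → ℝ≥0∞ :=
  {ω | (n : ℝ) < |X ω|}.indicator fun ω => ‖X ω‖ₑ

lemma measurable_absTail (hX : Measurable X) (n : ℕ) : Measurable (absTail X n) :=
  hX.enorm.indicator (measurableSet_lt measurable_const hX.abs)

lemma absTail_le (X : α → ℝ) (n : ℕ) (ω : α) : absTail X n ω ≤ ‖X ω‖ₑ :=
  indicator_le_self _ _ ω

lemma enorm_le_natCast_add_absTail (X : α → ℝ) (n : ℕ) (ω : α) : ‖X ω‖ₑ ≤ n + absTail X n ω := by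
  by_cases hω : (n : ℝ) < |X ω|
  · rw [absTail, indicator_of_mem (show ω ∈ {ω | (n : ℝ) < |X ω|} from hω)]
    exact le_add_self
  · refine le_add_right ?_
    rw [Real.enorm_eq_ofReal_abs, ← ENNReal.ofReal_natCast]
    exact ENNReal.ofReal_le_ofReal (not_lt.1 hω)

lemma tendsto_lintegral_absTail (hX : Measurable X) (hint : ∫⁻ ω, ‖X ω‖ₑ ∂P ≠ ⊤) :
    Tendsto (fun n => ∫⁻ ω, absTail X n ω ∂P) atTop (nhds 0) := by
  have hzero : ∀ ω, Tendsto (fun n => absTail X n ω) atTop (nhds 0) := fun ω => by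
    refine tendsto_const_nhds.congr' ?_
    obtain ⟨N, hN⟩ := exists_nat_ge |X ω|
    filter_upwards [eventually_ge_atTop N] with n hn
    rw [absTail, indicator_of_notMem]
    exact not_lt.2 (hN.trans (Nat.cast_le.2 hn))
  simpa using tendsto_lintegral_of_dominated_convergence _ (measurable_absTail hX)
    (fun n => ae_of_all _ (absTail_le X n)) hint (ae_of_all _ hzero)

lemma tailSup_eq_upperExp_absTail (hD : D ⊆ Dens P) (hX : Measurable X) (n : ℕ) :
    tailSup P D X n = upperExp P D (absTail X n) := by
  refine biSup_congr fun Z hZ => ?_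
  rw [← lintegral_ofReal_mul_enorm (hD hZ).2.1,
    ← lintegral_indicator (measurableSet_lt measurable_const hX.abs)]
  simp only [absTail, indicator_mul_right]

lemma lintegral_mul_enorm_ne_top_of_mem_Lw (hX : X ∈ Lw P D) (hZD : Z ∈ D) (hZ : Z ∈ Dens P) :
    ∫⁻ ω, ENNReal.ofReal (Z ω) * ‖X ω‖ₑ ∂P ≠ ⊤ := by
  have hneg : ∀ Y : Ω → ℝ, ⊥ < cohU P D Y → ∫⁻ ω, ENNReal.ofReal (-(Z ω * Y ω)) ∂P ≠ ⊤ := by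
    intro Y hY htop
    have h : cohU P D Y ≤ eexp P Z Y := iInf₂_le Z hZD
    rw [eexp, if_pos htop] at h
    exact hY.not_ge h
  obtain ⟨hXm, hlower, hupper⟩ := hX
  have hpos := hneg _ hupper
  simp only [mul_neg, neg_neg] at hpos
  refine ne_top_of_le_ne_top (ENNReal.add_ne_top.2 ⟨hpos, hneg X hlower⟩) ?_
  have hm : Measurable fun ω => ENNReal.ofReal (Z ω * X ω) := (hZ.1.mul hXm).ennreal_ofReal
  rw [← lintegral_add_left hm, lintegral_ofReal_mul_enorm hZ.2.1]
  refine lintegral_mono fun ω => ?_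
  rcases abs_choice (X ω) with h | h
  · rw [h]; exact le_self_add
  · rw [h, mul_neg]; exact le_add_self

lemma bot_lt_cohU (hD : D ⊆ Dens P) (hX : upperExp P D (fun ω => ‖X ω‖ₑ) ≠ ⊤) :
    ⊥ < cohU P D X := by
  set c := upperExp P D fun ω => ‖X ω‖ₑ
  have hbound : -(c : EReal) ≤ cohU P D X := by
    refine le_iInf₂ fun Z hZ => ?_
    have hneg : ∫⁻ ω, ENNReal.ofReal (-(Z ω * X ω)) ∂P ≤ c := by
      refine le_trans ?_ (lintegral_mul_le_upperExp hZ)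
      rw [lintegral_ofReal_mul_enorm (hD hZ).2.1]
      refine lintegral_mono fun ω => ENNReal.ofReal_le_ofReal ?_
      rw [← mul_neg]
      exact mul_le_mul_of_nonneg_left (neg_le_abs _) ((hD hZ).2.1 ω)
    rw [eexp, if_neg (ne_top_of_le_ne_top hX hneg), sub_eq_add_neg]
    exact le_add_of_nonneg_of_le (EReal.coe_ennreal_nonneg _)
      (EReal.neg_le_neg_iff.2 (EReal.coe_ennreal_le_coe_ennreal_iff.2 hneg))
  refine lt_of_lt_of_le ?_ hbound
  rwa [bot_lt_iff_ne_bot, Ne, EReal.neg_eq_bot_iff, EReal.coe_ennreal_eq_top_iff]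

lemma upperExp_enorm_ne_top_of_mem_Ls (hD : D ⊆ Dens P) (hX : X ∈ Ls P D) :
    upperExp P D (fun ω => ‖X ω‖ₑ) ≠ ⊤ := by
  obtain ⟨hXm, hlim⟩ := hX
  obtain ⟨n, hn⟩ := (hlim.eventually_lt_const one_pos).exists
  refine ne_top_of_le_ne_top (b := (n : ℝ≥0∞) + 1) (by finiteness) ?_
  calc upperExp P D (fun ω => ‖X ω‖ₑ)
      ≤ upperExp P D (fun ω => (n : ℝ≥0∞) + absTail X n ω) :=
        upperExp_mono (enorm_le_natCast_add_absTail X n)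
    _ ≤ upperExp P D (fun _ => (n : ℝ≥0∞)) + upperExp P D (absTail X n) :=
        upperExp_add_le hD measurable_const
    _ ≤ n + 1 := by
        rw [← tailSup_eq_upperExp_absTail hD hXm]
        exact add_le_add (upperExp_le_of_le_const hD fun _ => le_rfl) hn.le

lemma Ls_subset_Lw (hD : D ⊆ Dens P) : Ls P D ⊆ Lw P D := fun X hX => by
  have hfin := upperExp_enorm_ne_top_of_mem_Ls hD hX
  exact ⟨hX.1, bot_lt_cohU hD hfin, bot_lt_cohU hD (by simpa using hfin)⟩

end WeakAndStrong

/-- If `μ` is a probability measure concentrated on `(0,1]` and `D_μ` is the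
determining set of the corresponding Weighted V@R, then `L¹_w(D_μ) = L¹_s(D_μ)`. -/
theorem stmt_3 (P : Measure Ω) [IsProbabilityMeasure P]
    (μ : Measure ℝ) [IsProbabilityMeasure μ] (hμ : μ (Set.Ioc (0 : ℝ) 1)ᶜ = 0) :
    Lw P (WVDet P μ) = Ls P (WVDet P μ) := by
  refine Subset.antisymm (fun X hX => ?_) (Ls_subset_Lw WVDet_subset_Dens)
  have hμ' : ∀ᵐ l ∂μ, l ∈ Ioc (0 : ℝ) 1 := hμ
  have hXm : Measurable X := hX.1
  have hfin : ∀ Z ∈ WVDet P μ, ∫⁻ ω, ENNReal.ofReal (Z ω) * ‖X ω‖ₑ ∂P ≠ ⊤ := fun Z hZ =>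
    lintegral_mul_enorm_ne_top_of_mem_Lw hX hZ hZ.1
  have hXint : ∫⁻ ω, ‖X ω‖ₑ ∂P ≠ ⊤ := by simpa using hfin _ (one_mem_WVDet hμ')
  have hmixed : ∫⁻ l, upperExp P (TVDens P l) (fun ω => ‖X ω‖ₑ) ∂μ ≠ ⊤ :=
    lintegral_upperExp_TVDens_ne_top hμ' hXm.enorm hfin
  refine ⟨hXm, ?_⟩
  exact (tendsto_congr (tailSup_eq_upperExp_absTail WVDet_subset_Dens hXm)).2
    (tendsto_upperExp_WVDet_zero hμ' (measurable_absTail hXm) (absTail_le X) hmixed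
      (tendsto_lintegral_absTail hXm hXint))
end
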